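/- arXiv:2502.17738 — 12 statements merged into one kernel-verified Lean document; each statement's English description precedes it below -/
import Mathlib

section
/- Let X be a compact topological space equipped with a finite Borel measure μ, and let p, q be continuous, strictly positive probability densities on X. Then the infimum, over all r ∈ ℕ and all chains of probability densities μ_0, μ_1, …, μ_{r+1} on X with μ_0 = p and μ_{r+1} = q, of the sum ∑_{s=0}^{r} KL(μ_{s+1} ‖ μ_s) equals 0. -/
/-!
The divergence `KL(a‖b)` is second order in `a - b`: from `log t ≤ t - 1` one gets
`a log (a / b) ≤ (a - b)² / b + (a - b)`, and `∫ (a - b) = 0` when both are probability densities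
(`klDiv_le_of_abs_sub_le`). Cutting the segment from `p` to `q` into `N` equal pieces makes each
increment at most `M / N`, with densities uniformly bounded below by some `m > 0` by compactness.
Each of the `N` divergences is then at most `(M / N)² / m * μ(X)`, so their sum is `O(1 / N)`.
-/

open MeasureTheory Real ENNReal

/-- A probability density on a measure space `(X, μ)`: a nonnegative measurable
function with total integral one. -/
def IsProbDensity {X : Type*} [MeasurableSpace X] (μ : Measure X) (p : X → ℝ) : Prop :=
  Measurable p ∧ (∀ x, 0 ≤ p x) ∧ ∫ x, p x ∂μ = 1

open scoped Classical in
/-- The KL divergence `KL(p‖q) = ∫ p log(p/q) dμ`, taken to be `+∞` when undefined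
(i.e. when the integrand is not integrable). -/
noncomputable def klDiv {X : Type*} [MeasurableSpace X] (μ : Measure X)
    (p q : X → ℝ) : ℝ≥0∞ :=
  if Integrable (fun x => p x * Real.log (p x / q x)) μ then
    ENNReal.ofReal (∫ x, p x * Real.log (p x / q x) ∂μ)
  else ⊤

lemma integrable_of_continuous_compactSpace {X : Type*} [TopologicalSpace X] [CompactSpace X]
    [MeasurableSpace X] [BorelSpace X] (μ : Measure X) [IsFiniteMeasure μ]
    {f : X → ℝ} (hf : Continuous f) : Integrable f μ :=
  hf.integrable_of_hasCompactSupport (HasCompactSupport.of_compactSpace f)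

/-- For densities bounded below by `m`, the KL divergence is at most `μ(X) / m` times the square of
their uniform distance; equality of the integrals cancels the first-order term. -/
lemma klDiv_le_of_abs_sub_le {X : Type*} [TopologicalSpace X] [CompactSpace X]
    [MeasurableSpace X] [BorelSpace X] (μ : Measure X) [IsFiniteMeasure μ]
    {a b : X → ℝ} (ha : Continuous a) (hb : Continuous b)
    (hab : ∫ x, a x ∂μ = ∫ x, b x ∂μ) {m δ : ℝ} (hm : 0 < m)
    (hma : ∀ x, m ≤ a x) (hmb : ∀ x, m ≤ b x) (hδ : ∀ x, |a x - b x| ≤ δ) :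
    klDiv μ a b ≤ ENNReal.ofReal (δ ^ 2 / m * μ.real Set.univ) := by
  have hapos : ∀ x, 0 < a x := fun x => hm.trans_le (hma x)
  have hbpos : ∀ x, 0 < b x := fun x => hm.trans_le (hmb x)
  have hint : Integrable (fun x => a x * Real.log (a x / b x)) μ := by
    apply integrable_of_continuous_compactSpace
    exact ha.mul ((ha.div hb fun x => (hbpos x).ne').log
      fun x => (div_pos (hapos x) (hbpos x)).ne')
  have hia := integrable_of_continuous_compactSpace μ ha
  have hib := integrable_of_continuous_compactSpace μ hb
  rw [klDiv, if_pos hint]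
  apply ENNReal.ofReal_le_ofReal
  calc ∫ x, a x * Real.log (a x / b x) ∂μ
      ≤ ∫ x, (δ ^ 2 / m + (a x - b x)) ∂μ := by
        refine integral_mono hint ((integrable_const _).add (hia.sub hib)) fun x => ?_
        have h1 : a x * Real.log (a x / b x) ≤ a x * (a x / b x - 1) :=
          mul_le_mul_of_nonneg_left
            (Real.log_le_sub_one_of_pos (div_pos (hapos x) (hbpos x))) (hapos x).le
        have h2 : a x * (a x / b x - 1) = (a x - b x) ^ 2 / b x + (a x - b x) := by
          have := (hbpos x).ne'
          field_simp
          ring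
        have h3 : (a x - b x) ^ 2 / b x ≤ δ ^ 2 / m :=
          div_le_div₀ (sq_nonneg δ) (sq_le_sq.mpr ((hδ x).trans (le_abs_self δ))) hm (hmb x)
        simp only
        linarith
    _ = δ ^ 2 / m * μ.real Set.univ := by
        have hsub : Integrable (fun x => a x - b x) μ := hia.sub hib
        rw [integral_add (integrable_const _) hsub, integral_sub hia hib, hab]
        simp [mul_comm]

/-- For continuous strictly positive probability densities `p, q` on a compact space with a
finite Borel measure, the infimum over all finite chains of probability densities joining
`p` to `q` of the sum of consecutive KL divergences equals `0`. -/
theorem sInf_chain_klDiv_eq_zero {X : Type*} [TopologicalSpace X] [CompactSpace X]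
    [MeasurableSpace X] [BorelSpace X] (μ : Measure X) [IsFiniteMeasure μ]
    (p q : X → ℝ) (hp : IsProbDensity μ p) (hq : IsProbDensity μ q)
    (hpc : Continuous p) (hqc : Continuous q)
    (hppos : ∀ x, 0 < p x) (hqpos : ∀ x, 0 < q x) :
    sInf {c : ℝ≥0∞ | ∃ (r : ℕ) (ρ : ℕ → X → ℝ),
        (∀ s ≤ r + 1, IsProbDensity μ (ρ s)) ∧ ρ 0 = p ∧ ρ (r + 1) = q ∧
        c = ∑ s ∈ Finset.range (r + 1), klDiv μ (ρ (s + 1)) (ρ s)} = 0 := by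
  have hne : Nonempty X := by
    by_contra h
    rw [not_nonempty_iff] at h
    have := hp.2.2
    rw [Measure.eq_zero_of_isEmpty μ, integral_zero_measure] at this
    exact zero_ne_one this
  obtain ⟨m, hm, hmp, hmq⟩ : ∃ m : ℝ, 0 < m ∧ (∀ x, m ≤ p x) ∧ ∀ x, m ≤ q x := by
    obtain ⟨y, -, hy⟩ := isCompact_univ.exists_isMinOn Set.univ_nonempty hpc.continuousOn
    obtain ⟨z, -, hz⟩ := isCompact_univ.exists_isMinOn Set.univ_nonempty hqc.continuousOn
    exact ⟨min (p y) (q z), lt_min (hppos y) (hqpos z),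
      fun x => (min_le_left _ _).trans (hy (Set.mem_univ x)),
      fun x => (min_le_right _ _).trans (hz (Set.mem_univ x))⟩
  obtain ⟨M, hM⟩ : ∃ M : ℝ, ∀ x, |q x - p x| ≤ M := by
    obtain ⟨y, -, hy⟩ := isCompact_univ.exists_isMaxOn Set.univ_nonempty
      (hqc.sub hpc).abs.continuousOn
    exact ⟨|q y - p y|, fun x => hy (Set.mem_univ x)⟩
  set C : ℝ := M ^ 2 / m * μ.real Set.univ with hC
  have hip := integrable_of_continuous_compactSpace μ hpc
  have hiq := integrable_of_continuous_compactSpace μ hqc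
  have key : ∀ r : ℕ, sInf {c : ℝ≥0∞ | ∃ (r : ℕ) (ρ : ℕ → X → ℝ),
        (∀ s ≤ r + 1, IsProbDensity μ (ρ s)) ∧ ρ 0 = p ∧ ρ (r + 1) = q ∧
        c = ∑ s ∈ Finset.range (r + 1), klDiv μ (ρ (s + 1)) (ρ s)}
      ≤ ENNReal.ofReal (C / ((r : ℝ) + 1)) := by
    intro r
    have hN : (0 : ℝ) < (r : ℝ) + 1 := by positivity
    let ρ : ℕ → X → ℝ := fun s x => p x + (s : ℝ) / ((r : ℝ) + 1) * (q x - p x)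
    have hcont : ∀ s, Continuous (ρ s) := fun s =>
      hpc.add (continuous_const.mul (hqc.sub hpc))
    have hlow : ∀ s ≤ r + 1, ∀ x, m ≤ ρ s x := by
      intro s hs x
      have ht0 : (0 : ℝ) ≤ (s : ℝ) / ((r : ℝ) + 1) := by positivity
      have ht1 : (s : ℝ) / ((r : ℝ) + 1) ≤ 1 := by
        rw [div_le_one hN]
        exact_mod_cast hs
      change m ≤ p x + (s : ℝ) / ((r : ℝ) + 1) * (q x - p x)
      nlinarith [mul_nonneg ht0 (sub_nonneg.mpr (hmq x)),
        mul_nonneg (sub_nonneg.mpr ht1) (sub_nonneg.mpr (hmp x))]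
    have hone : ∀ s, ∫ x, ρ s x ∂μ = 1 := by
      intro s
      change ∫ x, (p x + (s : ℝ) / ((r : ℝ) + 1) * (q x - p x)) ∂μ = 1
      have hsub : Integrable (fun x => q x - p x) μ := hiq.sub hip
      rw [integral_add hip (hsub.const_mul _), integral_const_mul,
        integral_sub hiq hip, hp.2.2, hq.2.2]
      simp
    have hbound : ∀ s ∈ Finset.range (r + 1), klDiv μ (ρ (s + 1)) (ρ s)
        ≤ ENNReal.ofReal ((M / ((r : ℝ) + 1)) ^ 2 / m * μ.real Set.univ) := by
      intro s hs
      have hs' : s < r + 1 := Finset.mem_range.mp hs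
      refine klDiv_le_of_abs_sub_le μ (hcont _) (hcont _) ((hone _).trans (hone _).symm) hm
        (hlow _ hs') (hlow _ hs'.le) fun x => ?_
      have hdiff : ρ (s + 1) x - ρ s x = (q x - p x) / ((r : ℝ) + 1) := by
        simp only [ρ]
        push_cast
        field_simp
        ring
      rw [hdiff, abs_div, abs_of_pos hN]
      exact div_le_div_of_nonneg_right (hM x) hN.le
    refine le_trans (b := ∑ s ∈ Finset.range (r + 1), klDiv μ (ρ (s + 1)) (ρ s))
      (sInf_le ⟨r, ρ, fun s hs => ⟨(hcont s).measurable,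
        fun x => hm.le.trans (hlow s hs x), hone s⟩, ?_, ?_, rfl⟩)
      ((Finset.sum_le_sum hbound).trans (le_of_eq ?_))
    · funext x
      simp [ρ]
    · funext x
      simp only [ρ]
      push_cast
      rw [div_self hN.ne']
      ring
    · rw [Finset.sum_const, Finset.card_range, ← ENNReal.ofReal_nsmul, nsmul_eq_mul, hC]
      congr 1
      push_cast
      field_simp
  have hlim : Filter.Tendsto (fun r : ℕ => ENNReal.ofReal (C / ((r : ℝ) + 1)))
      Filter.atTop (nhds 0) := by
    have := ENNReal.tendsto_ofReal ((tendsto_const_div_atTop_nhds_zero_nat C).comp (Filter.tendsto_add_atTop_nat 1))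
    simpa [Function.comp_def] using this
  exact le_antisymm (ge_of_tendsto' hlim key) bot_le
end

section
/- For every real number x with 0 < x ≤ 1, one has (arccos x)² + 2 log x ≤ 0; equivalently, (arccos x)² ≤ 2 log(1/x). -/
/-!
Put `t = arccos x ∈ [0, π/2)`, so that the claim reads `t² + 2 log (cos t) ≤ 0`. The left side
vanishes at `t = 0`, and its derivative `2t - 2 tan t` is nonpositive on `[0, π/2)` because
`t ≤ tan t` there.
-/

theorem antitoneOn_sq_add_two_log_cos :
    AntitoneOn (fun t : ℝ => t ^ 2 + 2 * Real.log (Real.cos t)) (Set.Ico 0 (Real.pi / 2)) := by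
  have hderiv : ∀ t ∈ Set.Ico 0 (Real.pi / 2),
      HasDerivAt (fun t : ℝ => t ^ 2 + 2 * Real.log (Real.cos t)) (2 * t - 2 * Real.tan t) t := by
    intro t ht
    have hcos : 0 < Real.cos t :=
      Real.cos_pos_of_mem_Ioo ⟨by linarith [ht.1, Real.pi_pos], ht.2⟩
    refine ((hasDerivAt_pow 2 t).add
      (((Real.hasDerivAt_cos t).log hcos.ne').const_mul 2)).congr_deriv ?_
    rw [Real.tan_eq_sin_div_cos]
    push_cast
    ring
  refine antitoneOn_of_deriv_nonpos (convex_Ico _ _)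
    (fun t ht => (hderiv t ht).continuousAt.continuousWithinAt)
    (fun t ht => (hderiv t (interior_subset ht)).differentiableAt.differentiableWithinAt) ?_
  intro t ht
  have ht' := interior_subset ht
  rw [(hderiv t ht').deriv]
  linarith [Real.le_tan ht'.1 ht'.2]

/-- For every `0 < x ≤ 1`, `(arccos x)² + 2 log x ≤ 0`. -/
theorem arccos_sq_add_two_log_nonpos (x : ℝ) (hx0 : 0 < x) (hx1 : x ≤ 1) :
    (Real.arccos x) ^ 2 + 2 * Real.log x ≤ 0 := by
  have h := antitoneOn_sq_add_two_log_cos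
    (show (0 : ℝ) ∈ Set.Ico 0 (Real.pi / 2) from ⟨le_rfl, by positivity⟩)
    (show Real.arccos x ∈ Set.Ico 0 (Real.pi / 2) from
      ⟨Real.arccos_nonneg x, Real.arccos_lt_pi_div_two.2 hx0⟩)
    (Real.arccos_nonneg x)
  simpa [Real.cos_arccos (by linarith) hx1] using h
end

section
/- Let (X, μ) be a measure space and let p, q be probability densities on X. Then d_H((p+q)/2, p) ≥ d_H(p, q)/(2 + √2); equivalently, ∫_X (√((p+q)/2) − √p)² dμ ≥ (2+√2)^{−2} ∫_X (√p − √q)² dμ. -/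
/-!
The inequality already holds pointwise. With `a = √p`, `b = √q`, `m = √((p+q)/2)` one has
`2 (m - a) (m + a) = (b - a) (b + a)`, while `2 m ≤ √2 (a + b)` gives
`2 (m + a) ≤ (2 + √2) (a + b)`; hence `|a - b| ≤ (2 + √2) |m - a|`
(`abs_sqrt_sub_sqrt_le_midpoint`). Squaring and integrating gives the theorem; the integral on the
larger side is finite because `(m - a)² ≤ m² + a² = (p+q)/2 + p`.
-/

open MeasureTheory Real

lemma IsProbDensity.integrable {X : Type*} [MeasurableSpace X] {μ : Measure X} {p : X → ℝ}
    (hp : IsProbDensity μ p) : Integrable p μ := by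
  -- A non-integrable function would have Bochner integral `0`, not `1`.
  by_contra h
  have h1 := hp.2.2
  rw [integral_undef h] at h1
  exact zero_ne_one h1

lemma abs_sqrt_sub_sqrt_le_midpoint {s t : ℝ} (hs : 0 ≤ s) (ht : 0 ≤ t) :
    |√s - √t| ≤ (2 + √2) * |√((s + t) / 2) - √s| := by
  have ha := Real.sqrt_nonneg s
  have hb := Real.sqrt_nonneg t
  have hm := Real.sqrt_nonneg ((s + t) / 2)
  have ha2 := Real.sq_sqrt hs
  have hb2 := Real.sq_sqrt ht
  have hm2 : √((s + t) / 2) ^ 2 = (s + t) / 2 := Real.sq_sqrt (by positivity)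
  have hr := Real.sqrt_nonneg 2
  have hr2 : √2 ^ 2 = 2 := Real.sq_sqrt (by norm_num)
  generalize √s = a at *
  generalize √t = b at *
  generalize √((s + t) / 2) = m at *
  generalize √2 = r at *
  rcases (add_nonneg ha hb).eq_or_lt with h0 | hpos
  · have ha0 : a = 0 := by linarith
    have hb0 : b = 0 := by linarith
    rw [ha0, hb0, sub_zero, abs_zero]
    positivity
  have hle : 2 * m ≤ r * (a + b) := by
    refine abs_le_of_sq_le_sq' ?_ (by positivity) |>.2
    have : (r * (a + b)) ^ 2 = 2 * (a + b) ^ 2 := by rw [mul_pow, hr2]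
    rw [this]
    nlinarith [mul_nonneg ha hb]
  have hkey : |a - b| * (a + b) = |m - a| * (2 * (m + a)) := by
    rw [abs_sub_comm a b, ← abs_of_pos hpos, ← abs_mul,
      ← abs_of_nonneg (show 0 ≤ 2 * (m + a) by positivity), ← abs_mul]
    congr 1
    nlinarith
  refine le_of_mul_le_mul_right ?_ hpos
  calc |a - b| * (a + b) = |m - a| * (2 * (m + a)) := hkey
    _ ≤ |m - a| * ((2 + r) * (a + b)) := by
        refine mul_le_mul_of_nonneg_left ?_ (abs_nonneg _)
        linarith
    _ = (2 + r) * |m - a| * (a + b) := by ring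

/-- For probability densities `p, q`, the Hellinger distance between the midpoint
`(p+q)/2` and `p` is at least `d_H(p, q)/(2 + √2)`. -/
theorem hellinger_midpoint_lower_bound {X : Type*} [MeasurableSpace X] (μ : Measure X)
    (p q : X → ℝ) (hp : IsProbDensity μ p) (hq : IsProbDensity μ q) :
    Real.sqrt (∫ x, (Real.sqrt ((p x + q x) / 2) - Real.sqrt (p x)) ^ 2 ∂μ) ≥
      Real.sqrt (∫ x, (Real.sqrt (p x) - Real.sqrt (q x)) ^ 2 ∂μ) / (2 + Real.sqrt 2) := by
  have hpm := hp.1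
  have hqm := hq.1
  have hint : Integrable (fun x => (√((p x + q x) / 2) - √(p x)) ^ 2) μ := by
    refine (((hp.integrable.add hq.integrable).div_const 2).add hp.integrable).mono'
      (by fun_prop) (Filter.Eventually.of_forall fun x => ?_)
    have hp0 := hp.2.1 x
    have hq0 := hq.2.1 x
    rw [Real.norm_of_nonneg (sq_nonneg _)]
    have h1 := Real.sq_sqrt hp0
    have h2 := Real.sq_sqrt (show 0 ≤ (p x + q x) / 2 by positivity)
    have h3 := mul_nonneg (Real.sqrt_nonneg (p x)) (Real.sqrt_nonneg ((p x + q x) / 2))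
    simp only [Pi.add_apply]
    nlinarith
  have hle : ∫ x, (√(p x) - √(q x)) ^ 2 ∂μ ≤
      (2 + √2) ^ 2 * ∫ x, (√((p x + q x) / 2) - √(p x)) ^ 2 ∂μ := by
    rw [← integral_const_mul]
    refine integral_mono_of_nonneg (Filter.Eventually.of_forall fun x => sq_nonneg _)
      (hint.const_mul _) (Filter.Eventually.of_forall fun x => ?_)
    have h := pow_le_pow_left₀ (abs_nonneg _)
      (abs_sqrt_sub_sqrt_le_midpoint (hp.2.1 x) (hq.2.1 x)) 2
    rwa [mul_pow, sq_abs, sq_abs] at h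
  rw [ge_iff_le, div_le_iff₀' (by positivity)]
  calc √(∫ x, (√(p x) - √(q x)) ^ 2 ∂μ)
      ≤ √((2 + √2) ^ 2 * ∫ x, (√((p x + q x) / 2) - √(p x)) ^ 2 ∂μ) := Real.sqrt_le_sqrt hle
    _ = (2 + √2) * √(∫ x, (√((p x + q x) / 2) - √(p x)) ^ 2 ∂μ) := by
        rw [Real.sqrt_mul (by positivity), Real.sqrt_sq (by positivity)]
end

section
/- Let (X, μ) be a measure space with finite total mass V = μ(X) < ∞, let C > 0 and ε > 0, and let p, p', q, q' be probability densities on X such that p(x), p'(x), q(x), q'(x) ≥ C for all x, |p(x) − p'(x)| ≤ ε for all x, and |q(x) − q'(x)| ≤ ε for all x. Then d_H²(p, q) − d_H²(p', q') ≤ 2 √(V/C) · ε · d_H(p, q) + 2 (V/C) · ε². -/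
/-!
Write `f = √p - √q`, `g = √p' - √q'`. Since the square root is `1/(2√C)`-Lipschitz on `[C, ∞)`,
`|f - g| ≤ ε/√C` pointwise. As `f² - g² = 2 f (f - g) - (f - g)² ≤ 2 (ε/√C) |f|`, integrating and
applying Cauchy–Schwarz, `∫ |f| ≤ √V (∫ f²)^{1/2}`, gives the bound already without the
nonnegative term `2 (V/C) ε²`.
-/

open MeasureTheory Real

lemma abs_sqrt_sub_sqrt_le {C ε a b : ℝ} (hC : 0 < C) (ha : C ≤ a) (hb : C ≤ b)
    (h : |a - b| ≤ ε) : |√a - √b| ≤ ε / √C / 2 := by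
  have hs : 0 < √C := Real.sqrt_pos.2 hC
  have h1 : √C ≤ √a := Real.sqrt_le_sqrt ha
  have h2 : √C ≤ √b := Real.sqrt_le_sqrt hb
  have e : a - b = (√a - √b) * (√a + √b) := by
    have := Real.sq_sqrt (hC.le.trans ha)
    have := Real.sq_sqrt (hC.le.trans hb)
    linarith
  rw [e, abs_mul, abs_of_pos (by linarith : 0 < √a + √b)] at h
  rw [div_div, le_div_iff₀ (by positivity)]
  refine le_trans ?_ h
  gcongr
  linarith

/-- Cauchy–Schwarz against the constant function `1` on a finite measure space. -/
lemma integral_abs_le_sqrt_mul_sqrt {X : Type*} [MeasurableSpace X] (μ : Measure X)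
    [IsFiniteMeasure μ] {f : X → ℝ} (hf : Integrable f μ) (hf2 : Integrable (fun x => f x ^ 2) μ) :
    ∫ x, |f x| ∂μ ≤ √(μ Set.univ).toReal * √(∫ x, f x ^ 2 ∂μ) := by
  -- The quadratic `t ↦ ∫ (|f| - t)²` is nonnegative, so its discriminant is nonpositive.
  have key : ∀ t : ℝ, 0 ≤ (μ Set.univ).toReal * (t * t) + (-2 * ∫ x, |f x| ∂μ) * t
      + ∫ x, f x ^ 2 ∂μ := by
    intro t
    have h0 : 0 ≤ ∫ x, (f x ^ 2 - (2 * t) * |f x| + t * t) ∂μ := by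
      refine integral_nonneg fun x => ?_
      have := sq_nonneg (|f x| - t)
      have := sq_abs (f x)
      change 0 ≤ f x ^ 2 - (2 * t) * |f x| + t * t
      nlinarith
    have hi : Integrable (fun x => (2 * t) * |f x|) μ := hf.abs.const_mul _
    have hs : Integrable (fun x => f x ^ 2 - (2 * t) * |f x|) μ := hf2.sub hi
    rw [integral_add hs (integrable_const _), integral_sub hf2 hi,
      integral_const_mul, integral_const, smul_eq_mul, Measure.real] at h0
    linarith
  have hd := discrim_le_zero key
  rw [discrim] at hd
  rw [← Real.sqrt_mul ENNReal.toReal_nonneg]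
  apply Real.le_sqrt_of_sq_le
  linarith

/-- A probability density is integrable because its Bochner integral is nonzero, hence its square
root is square-integrable. -/
lemma IsProbDensity.memLp_sqrt {X : Type*} [MeasurableSpace X] {μ : Measure X} {p : X → ℝ}
    (hp : IsProbDensity μ p) : MemLp (fun x => √(p x)) 2 μ := by
  obtain ⟨hm, h0, h1⟩ := hp
  rw [memLp_two_iff_integrable_sq hm.sqrt.aestronglyMeasurable]
  simp_rw [Real.sq_sqrt (h0 _)]
  exact Integrable.of_integral_ne_zero (by rw [h1]; exact one_ne_zero)

/-- Stability of the squared Hellinger distance under uniform perturbations of densities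
bounded below: if `p, p', q, q' ≥ C`, `|p − p'| ≤ ε` and `|q − q'| ≤ ε` pointwise, then
`d_H²(p, q) − d_H²(p', q') ≤ 2 √(V/C) ε d_H(p, q) + 2 (V/C) ε²` where `V = μ(X)`. -/
theorem hellinger_sq_perturbation {X : Type*} [MeasurableSpace X] (μ : Measure X)
    [IsFiniteMeasure μ] (C ε : ℝ) (hC : 0 < C) (hε : 0 < ε)
    (p p' q q' : X → ℝ)
    (hp : IsProbDensity μ p) (hp' : IsProbDensity μ p')
    (hq : IsProbDensity μ q) (hq' : IsProbDensity μ q')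
    (hlbp : ∀ x, C ≤ p x) (hlbp' : ∀ x, C ≤ p' x)
    (hlbq : ∀ x, C ≤ q x) (hlbq' : ∀ x, C ≤ q' x)
    (hpp' : ∀ x, |p x - p' x| ≤ ε) (hqq' : ∀ x, |q x - q' x| ≤ ε) :
    (∫ x, (Real.sqrt (p x) - Real.sqrt (q x)) ^ 2 ∂μ) -
        (∫ x, (Real.sqrt (p' x) - Real.sqrt (q' x)) ^ 2 ∂μ) ≤
      2 * Real.sqrt ((μ Set.univ).toReal / C) * ε *
          Real.sqrt (∫ x, (Real.sqrt (p x) - Real.sqrt (q x)) ^ 2 ∂μ) +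
        2 * ((μ Set.univ).toReal / C) * ε ^ 2 := by
  have hfL : MemLp (fun x => √(p x) - √(q x)) 2 μ := hp.memLp_sqrt.sub hq.memLp_sqrt
  have hgL : MemLp (fun x => √(p' x) - √(q' x)) 2 μ := hp'.memLp_sqrt.sub hq'.memLp_sqrt
  have hf : Integrable (fun x => √(p x) - √(q x)) μ := hfL.integrable (by norm_num)
  have hCS := integral_abs_le_sqrt_mul_sqrt μ hf hfL.integrable_sq
  have hmono : ∫ x, ((√(p x) - √(q x)) ^ 2 - (√(p' x) - √(q' x)) ^ 2) ∂μ ≤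
      ∫ x, 2 * (ε / √C) * |√(p x) - √(q x)| ∂μ := by
    refine integral_mono (hfL.integrable_sq.sub hgL.integrable_sq) (hf.abs.const_mul _) fun x => ?_
    have h1 := abs_sqrt_sub_sqrt_le hC (hlbp x) (hlbp' x) (hpp' x)
    have h2 := abs_sqrt_sub_sqrt_le hC (hlbq x) (hlbq' x) (hqq' x)
    change (√(p x) - √(q x)) ^ 2 - (√(p' x) - √(q' x)) ^ 2 ≤ 2 * (ε / √C) * |√(p x) - √(q x)|
    generalize hf : √(p x) - √(q x) = f
    generalize hg : √(p' x) - √(q' x) = g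
    have h3 : |f - g| ≤ ε / √C := by
      have e : f - g = (√(p x) - √(p' x)) - (√(q x) - √(q' x)) := by rw [← hf, ← hg]; ring
      rw [e]
      exact (abs_sub _ _).trans (by linarith)
    have h4 : f * (f - g) ≤ |f| * (ε / √C) :=
      (le_abs_self _).trans (by rw [abs_mul]; gcongr)
    nlinarith [sq_nonneg (f - g)]
  rw [integral_sub hfL.integrable_sq hgL.integrable_sq, integral_const_mul] at hmono
  have hnn : 0 ≤ 2 * ((μ Set.univ).toReal / C) * ε ^ 2 := by positivity
  have hmul := mul_le_mul_of_nonneg_left hCS (by positivity : 0 ≤ 2 * (ε / √C))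
  rw [Real.sqrt_div ENNReal.toReal_nonneg]
  calc _ ≤ _ := hmono.trans hmul
    _ = 2 * (√(μ Set.univ).toReal / √C) * ε * √(∫ x, (√(p x) - √(q x)) ^ 2 ∂μ) := by ring
    _ ≤ _ := le_add_of_nonneg_right hnn
end

section
/- Let τ > 0 and let (η_k)_{k≥1} and (α_k)_{k≥1} be positive real sequences such that: η_k is decreasing with limit 0 and ∑_k η_k = ∞; α_k → 0 and (α_{k−1} − α_k)/(η_k α_k) → 0 as k → ∞; and the sequence α_k e^{τ(η_1 + ⋯ + η_k)} tends to +∞ and is increasing for all sufficiently large k. Then, writing S_k = η_1 + ⋯ + η_k, the limit lim_{k→∞} (∑_{l=1}^{k} α_l η_l e^{τ S_l}) / (α_k e^{τ S_k}) exists and equals 1/τ. -/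
/-!
Write `b k = α k * exp (τ S k)` and `c k = η k * b k`, so that the claim is `(∑ c) / b → 1 / τ`.
Since `α k / α (k + 1) = 1 + η (k + 1) * r (k + 1)` with `r → 0`,
`(b (k + 1) - b k) / c (k + 1) = (1 - exp (-τ η)) / η - r * exp (-τ η) → τ`,
where `η` and `r` are taken at `k + 1`; the limit of the first term is the derivative of
`x ↦ 1 - exp (-τ x)` at `0`. The Stolz–Cesàro theorem (`stolz_inv`) then gives `b / ∑ c → τ`,
and it remains to invert.
-/

open Filter

/-- A form of the Stolz–Cesàro theorem in which divergence is assumed of the sequence `b` whose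
increments are compared with `c`; the divergence of `∑ c` follows, because a summable `c` would
make the increments of `b` summable. -/
lemma stolz_inv (b c : ℕ → ℝ) (t : ℝ) (ht : t ≠ 0) (hc : ∀ k, 0 < c k)
    (hb : Tendsto b atTop atTop)
    (h : Tendsto (fun k => (b (k + 1) - b k) / c k) atTop (nhds t)) :
    Tendsto (fun n => (∑ k ∈ Finset.range n, c k) / b n) atTop (nhds t⁻¹) := by
  have hbig : (fun k => b (k + 1) - b k) =O[atTop] c :=
    Asymptotics.isBigO_of_div_tendsto_nhds (Eventually.of_forall fun k hk => absurd hk (hc k).ne')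
      t h
  have hns : ¬ Summable c := by
    intro hs
    have h1 := (summable_of_isBigO_nat hs hbig).hasSum.tendsto_sum_nat
    simp only [Finset.sum_range_sub] at h1
    exact not_tendsto_nhds_of_tendsto_atTop (tendsto_atTop_add_const_right _ (-b 0) hb) _ h1
  have hC : Tendsto (fun n => ∑ k ∈ Finset.range n, c k) atTop atTop :=
    (not_summable_iff_tendsto_nat_atTop_of_nonneg fun k => (hc k).le).1 hns
  have hlo : (fun k => (b (k + 1) - b k) - t * c k) =o[atTop] c := by
    refine (Asymptotics.isLittleO_iff_tendsto fun k hk => absurd hk (hc k).ne').2 ?_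
    have h2 := h.sub_const t
    rw [sub_self] at h2
    refine h2.congr fun k => ?_
    have := (hc k).ne'
    field_simp
  have hsum := (hlo.sum_range (fun k => (hc k).le) hC).tendsto_div_nhds_zero
  simp only [Finset.sum_sub_distrib (fun k => b (k + 1) - b k), Finset.sum_range_sub,
    ← Finset.mul_sum] at hsum
  have h3 : Tendsto (fun n => b n / ∑ k ∈ Finset.range n, c k) atTop (nhds t) := by
    have h4 := (hsum.add (hC.const_div_atTop (b 0))).add_const t
    rw [add_zero, zero_add] at h4
    refine h4.congr' ?_
    filter_upwards [hC.eventually_gt_atTop 0] with n hn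
    field_simp
    ring
  refine (h3.inv₀ ht).congr fun n => ?_
  rw [inv_div]

lemma tendsto_one_sub_exp_div (τ : ℝ) (x : ℕ → ℝ) (hx : ∀ k, 0 < x k)
    (h : Tendsto x atTop (nhds 0)) :
    Tendsto (fun k => (1 - Real.exp (-(τ * x k))) / x k) atTop (nhds τ) := by
  have hd : HasDerivAt (fun y : ℝ => 1 - Real.exp (-(τ * y))) τ 0 := by
    have := ((((hasDerivAt_id (0 : ℝ)).const_mul τ).neg).exp).const_sub 1
    simpa using this
  have h0 := hd.tendsto_slope_zero
  have hx' : Tendsto x atTop (nhdsWithin 0 {0}ᶜ) :=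
    tendsto_nhdsWithin_iff.2 ⟨h, Eventually.of_forall fun k => (hx k).ne'⟩
  refine (h0.comp hx').congr fun k => ?_
  simp [div_eq_inv_mul]

/-- Stolz–Cesàro type limit: under the stated conditions on positive sequences
`(η_k)` and `(α_k)` (indexed from `k = 1`), writing `S_k = η_1 + ⋯ + η_k`, the ratio
`(∑_{l=1}^k α_l η_l e^{τ S_l}) / (α_k e^{τ S_k})` converges to `1/τ`. -/
theorem ratio_tendsto_inv_tau (τ : ℝ) (hτ : 0 < τ) (η α : ℕ → ℝ)
    (hη_pos : ∀ k, 1 ≤ k → 0 < η k) (hα_pos : ∀ k, 1 ≤ k → 0 < α k)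
    (hη_dec : ∀ k, 1 ≤ k → η (k + 1) ≤ η k)
    (hη_lim : Tendsto η atTop (nhds 0))
    (hη_sum : Tendsto (fun k => ∑ l ∈ Finset.Icc 1 k, η l) atTop atTop)
    (hα_lim : Tendsto α atTop (nhds 0))
    (hratio : Tendsto (fun k => (α (k - 1) - α k) / (η k * α k)) atTop (nhds 0))
    (hgrow : Tendsto (fun k => α k * Real.exp (τ * ∑ l ∈ Finset.Icc 1 k, η l)) atTop atTop)
    (hmono : ∃ N, ∀ k, N ≤ k →
      α k * Real.exp (τ * ∑ l ∈ Finset.Icc 1 k, η l) ≤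
        α (k + 1) * Real.exp (τ * ∑ l ∈ Finset.Icc 1 (k + 1), η l)) :
    Tendsto (fun k =>
        (∑ l ∈ Finset.Icc 1 k, α l * η l * Real.exp (τ * ∑ i ∈ Finset.Icc 1 l, η i)) /
          (α k * Real.exp (τ * ∑ l ∈ Finset.Icc 1 k, η l)))
      atTop (nhds (1 / τ)) := by
  have hsucc := tendsto_add_atTop_nat 1
  have hη' : ∀ k, 0 < η (k + 1) := fun k => hη_pos _ (Nat.le_add_left 1 k)
  have hα' : ∀ k, 0 < α (k + 1) := fun k => hα_pos _ (Nat.le_add_left 1 k)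
  have hη0 : Tendsto (fun k => η (k + 1)) atTop (nhds 0) := hη_lim.comp hsucc
  have hexp : Tendsto (fun k => Real.exp (-(τ * η (k + 1)))) atTop (nhds 1) := by
    simpa [Function.comp_def] using (Real.continuous_exp.tendsto _).comp (hη0.const_mul τ).neg
  have hinc := (tendsto_one_sub_exp_div τ _ hη' hη0).sub ((hratio.comp hsucc).mul hexp)
  rw [zero_mul, sub_zero] at hinc
  have key := stolz_inv (fun k => α k * Real.exp (τ * ∑ l ∈ Finset.Icc 1 k, η l))
    (fun k => α (k + 1) * η (k + 1) * Real.exp (τ * ∑ i ∈ Finset.Icc 1 (k + 1), η i)) τ hτ.ne'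
    (fun k => mul_pos (mul_pos (hα' k) (hη' k)) (Real.exp_pos _)) hgrow (by
      refine hinc.congr fun k => ?_
      have h1 := (hη' k).ne'
      have h2 := (hα' k).ne'
      have h3 := Real.exp_ne_zero (τ * ∑ l ∈ Finset.Icc 1 k, η l)
      have h4 := Real.exp_ne_zero (τ * η (k + 1))
      simp only [Function.comp_apply, Nat.add_sub_cancel,
        Finset.sum_Icc_succ_top (Nat.le_add_left 1 k), mul_add, Real.exp_add, Real.exp_neg]
      field_simp
      ring)
  rw [one_div]
  refine key.congr fun n => ?_
  congr 1
  rw [Finset.range_eq_Ico, Finset.sum_Ico_add' (fun l => α l * η l *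
    Real.exp (τ * ∑ i ∈ Finset.Icc 1 l, η i)) 0 n 1]
  rfl
end

section
/- Let τ > 0 and let (η_k)_{k≥1} and (α_k)_{k≥1} be positive real sequences such that: η_k is decreasing with limit 0, ∑_k η_k = ∞, and τ η_k ≤ 1/2 for every k; α_k → 0 and (α_{k−1} − α_k)/(η_k α_k) → 0 as k → ∞; and the sequence α_k e^{τ(η_1 + ⋯ + η_k)} tends to +∞ and is increasing for all sufficiently large k. Then there exist constants 0 < C₄' ≤ C₄ such that for every k ≥ 1: (C₄'/τ) α_k ≤ ∑_{l=1}^{k} α_l η_l ∏_{l' = l+1}^{k} (1 − τ η_{l'}) ≤ (C₄/τ) α_k. -/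
open Filter

/-!
The discounted sum `S k` satisfies `S (k+1) = (1 - τ η (k+1)) S k + α (k+1) η (k+1)`. The condition
on `(α (k-1) - α k) / (η k * α k)` gives `|α k - α (k+1)| ≤ (τ/2) η (k+1) α (k+1)` for large `k`,
and then the recursion propagates `S k ≤ C α k` to `k + 1` as soon as `C ≥ 2/τ`, and propagates
`α k ≤ C S k` as soon as `C ≥ 3τ/2`. The finitely many remaining indices only enlarge the constants
(`exists_bound_of_step`).
-/

/-- The discounted sum `∑_{l=1}^k α_l η_l ∏_{l'=l+1}^k (1 − τ η_{l'})`. -/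
noncomputable def discSum (τ : ℝ) (η α : ℕ → ℝ) (k : ℕ) : ℝ :=
  ∑ l ∈ Finset.Icc 1 k, α l * η l * ∏ l' ∈ Finset.Icc (l + 1) k, (1 - τ * η l')

lemma discSum_succ (τ : ℝ) (η α : ℕ → ℝ) (k : ℕ) :
    discSum τ η α (k + 1) =
      (1 - τ * η (k + 1)) * discSum τ η α k + α (k + 1) * η (k + 1) := by
  unfold discSum
  rw [Finset.sum_Icc_succ_top (by omega), Finset.mul_sum]
  congr 1
  · refine Finset.sum_congr rfl fun l hl => ?_
    have hl' := (Finset.mem_Icc.mp hl).2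
    rw [Finset.prod_Icc_succ_top (by omega)]
    ring
  · simp

/-- If the bound `x k ≤ C * y k` propagates from `k` to `k + 1` for all large `k` and all large `C`,
then it holds for all `k ≥ 1` with a single constant. -/
lemma exists_bound_of_step (x y : ℕ → ℝ) (hx : ∀ k, 1 ≤ k → 0 < x k)
    (hy : ∀ k, 1 ≤ k → 0 < y k) (B : ℝ) (hB : 0 < B) (N : ℕ)
    (step : ∀ k, N ≤ k → 1 ≤ k → ∀ C, B ≤ C → x k ≤ C * y k → x (k + 1) ≤ C * y (k + 1)) :
    ∃ C, 0 < C ∧ ∀ k, 1 ≤ k → x k ≤ C * y k := by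
  have hnn : ∀ l ∈ Finset.Icc 1 (N + 1), 0 ≤ x l / y l := fun l hl =>
    (div_pos (hx l (Finset.mem_Icc.mp hl).1) (hy l (Finset.mem_Icc.mp hl).1)).le
  have hsum := Finset.sum_nonneg hnn
  set T := ∑ l ∈ Finset.Icc 1 (N + 1), x l / y l with hT
  have small : ∀ k, 1 ≤ k → k ≤ N + 1 → x k ≤ (B + T) * y k := by
    intro k h1 h2
    have h := Finset.single_le_sum hnn (Finset.mem_Icc.mpr ⟨h1, h2⟩)
    rw [← div_le_iff₀ (hy k h1)]
    linarith
  refine ⟨B + T, by linarith, fun k hk => ?_⟩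
  induction k, hk using Nat.le_induction with
  | base => exact small 1 le_rfl (by omega)
  | succ k hk ih =>
    by_cases h : k + 1 ≤ N + 1
    · exact small _ (by omega) h
    · exact step k (by omega) hk _ (by linarith) ih

/-- Two-sided bound on the discounted sums `∑_{l=1}^k α_l η_l ∏_{l'=l+1}^k (1 − τ η_{l'})`:
under the stated conditions there are constants `0 < C₄' ≤ C₄` with
`(C₄'/τ) α_k ≤ ∑_{l=1}^k α_l η_l ∏_{l'=l+1}^k (1 − τ η_{l'}) ≤ (C₄/τ) α_k` for all `k ≥ 1`. -/
theorem discounted_sum_two_sided_bound (τ : ℝ) (hτ : 0 < τ) (η α : ℕ → ℝ)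
    (hη_pos : ∀ k, 1 ≤ k → 0 < η k) (hα_pos : ∀ k, 1 ≤ k → 0 < α k)
    (hη_dec : ∀ k, 1 ≤ k → η (k + 1) ≤ η k)
    (hη_lim : Tendsto η atTop (nhds 0))
    (hη_sum : Tendsto (fun k => ∑ l ∈ Finset.Icc 1 k, η l) atTop atTop)
    (hη_half : ∀ k, 1 ≤ k → τ * η k ≤ 1 / 2)
    (hα_lim : Tendsto α atTop (nhds 0))
    (hratio : Tendsto (fun k => (α (k - 1) - α k) / (η k * α k)) atTop (nhds 0))
    (hgrow : Tendsto (fun k => α k * Real.exp (τ * ∑ l ∈ Finset.Icc 1 k, η l)) atTop atTop)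
    (hmono : ∃ N, ∀ k, N ≤ k →
      α k * Real.exp (τ * ∑ l ∈ Finset.Icc 1 k, η l) ≤
        α (k + 1) * Real.exp (τ * ∑ l ∈ Finset.Icc 1 (k + 1), η l)) :
    ∃ C₄' C₄ : ℝ, 0 < C₄' ∧ C₄' ≤ C₄ ∧ ∀ k, 1 ≤ k →
      (C₄' / τ) * α k ≤
          (∑ l ∈ Finset.Icc 1 k, α l * η l * ∏ l' ∈ Finset.Icc (l + 1) k, (1 - τ * η l')) ∧
        (∑ l ∈ Finset.Icc 1 k, α l * η l * ∏ l' ∈ Finset.Icc (l + 1) k, (1 - τ * η l')) ≤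
          (C₄ / τ) * α k := by
  have hS1 : discSum τ η α 1 = α 1 * η 1 := by simp [discSum]
  have hSpos : ∀ k, 1 ≤ k → 0 < discSum τ η α k := by
    intro k hk
    induction k, hk using Nat.le_induction with
    | base => rw [hS1]; exact mul_pos (hα_pos 1 le_rfl) (hη_pos 1 le_rfl)
    | succ k hk ih =>
      rw [discSum_succ]
      have h1 := mul_pos (hα_pos (k + 1) (by omega)) (hη_pos (k + 1) (by omega))
      have h2 : 0 < 1 - τ * η (k + 1) := by linarith [hη_half (k + 1) (by omega)]
      have h3 := mul_pos h2 ih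
      linarith
  obtain ⟨N, hN⟩ : ∃ N, ∀ k, N ≤ k → 1 ≤ k →
      α k ≤ (1 + τ * η (k + 1) / 2) * α (k + 1) ∧
      (1 - τ * η (k + 1) / 2) * α (k + 1) ≤ α k := by
    obtain ⟨N, hN⟩ := Metric.tendsto_atTop.mp hratio (τ / 2) (by positivity)
    refine ⟨N, fun k hk h1 => ?_⟩
    have h := hN (k + 1) (by omega)
    have hp := mul_pos (hη_pos (k + 1) (by omega)) (hα_pos (k + 1) (by omega))
    rw [Real.dist_eq, sub_zero, Nat.add_sub_cancel, abs_lt, lt_div_iff₀ hp, div_lt_iff₀ hp] at h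
    constructor <;> nlinarith [h.1, h.2]
  obtain ⟨C, hC, hCb⟩ := exists_bound_of_step (discSum τ η α) α hSpos hα_pos (2 / τ)
    (by positivity) N (by
      intro k hk h1 C hBC ih
      rw [div_le_iff₀ hτ] at hBC
      have hb := hα_pos (k + 1) (by omega)
      have he := hη_pos (k + 1) (by omega)
      have hC : 0 < C := pos_of_mul_pos_left (by linarith) hτ.le
      have hq : 0 ≤ 1 - τ * η (k + 1) := by linarith [hη_half (k + 1) (by omega)]
      have e1 := mul_le_mul_of_nonneg_left
        (ih.trans (mul_le_mul_of_nonneg_left (hN k hk h1).1 hC.le)) hq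
      have e2 : 0 ≤ (C * τ - 2) * (η (k + 1) * α (k + 1)) :=
        mul_nonneg (by linarith) (mul_pos he hb).le
      have e3 : 0 ≤ C * (τ * η (k + 1)) ^ 2 * α (k + 1) := by positivity
      rw [discSum_succ]
      linarith)
  obtain ⟨D, hD, hDb⟩ := exists_bound_of_step α (discSum τ η α) hα_pos hSpos (3 * τ / 2)
    (by positivity) N (by
      intro k hk h1 C hBC ih
      have hb := hα_pos (k + 1) (by omega)
      have he := hη_pos (k + 1) (by omega)
      have hq : 0 ≤ 1 - τ * η (k + 1) := by linarith [hη_half (k + 1) (by omega)]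
      have e1 := mul_le_mul_of_nonneg_left ((hN k hk h1).2.trans ih) hq
      have e2 : 0 ≤ (C - 3 * τ / 2) * (η (k + 1) * α (k + 1)) :=
        mul_nonneg (by linarith) (mul_pos he hb).le
      have e3 : 0 ≤ (τ * η (k + 1)) ^ 2 * α (k + 1) := by positivity
      rw [discSum_succ]
      linarith)
  have hlow : ∀ k, 1 ≤ k → 1 / D * α k ≤ discSum τ η α k := by
    intro k hk
    rw [div_mul_eq_mul_div, one_mul, div_le_iff₀ hD, mul_comm]
    exact hDb k hk
  -- The two bounds at `k = 1` already order the constants.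
  have hDC : 1 / D ≤ C :=
    le_of_mul_le_mul_right ((hlow 1 le_rfl).trans (hCb 1 le_rfl)) (hα_pos 1 le_rfl)
  refine ⟨τ * (1 / D), τ * C, by positivity, mul_le_mul_of_nonneg_left hDC hτ.le,
    fun k hk => ?_⟩
  rw [mul_div_cancel_left₀ _ hτ.ne', mul_div_cancel_left₀ _ hτ.ne']
  exact ⟨hlow k hk, hCb k hk⟩
end

section
/- Let n ∈ ℕ, let F : ℝ → ℝ be convex and nondecreasing on [0, ∞) with nonnegative values there, and for each i ∈ {1, …, n} let φ_i : ℝ → ℝ satisfy φ_i(0) = 0 and |φ_i(a) − φ_i(b)| ≤ L_i |a − b| for all a, b ∈ ℝ, where L_i ≥ 0. Let S ⊆ ℝⁿ be a nonempty set such that all the suprema below are finite. Then, averaging over all sign vectors σ ∈ {−1, 1}ⁿ: 2^{−n} ∑_{σ ∈ {−1,1}ⁿ} F( (1/2) · sup_{s ∈ S} |∑_{i=1}^{n} σ_i φ_i(s_i)| ) ≤ 2^{−n} ∑_{σ ∈ {−1,1}ⁿ} F( sup_{s ∈ S} |∑_{i=1}^{n} σ_i L_i s_i| ). -/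
/-!
The one-sided comparison theorem `sum_signs_le` carries the proof: for `G : ℝ → ℝ` convex and
nondecreasing, and families `a i`, `b i` of bounded functions such that the increments and the
values of `a i` are dominated by those of `b i`,
`∑_σ G (sup (h + ∑ σ_i a_i)) ≤ ∑_σ G (sup (h + ∑ σ_i b_i))`.
It is proved one coordinate at a time. With `A, B = sup (h ± a)` and `P, Q = sup (h ± b)`, the
domination of values gives `A, B ≤ max P Q` and the domination of increments gives
`A + B ≤ P + Q`. Hence `(A, B)` is weakly majorized by `(P, Q)`, so `G A + G B ≤ G P + G Q`.

The two-sided statement follows with `G x = F (max x 0)`: since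
`sup |X| ≤ (sup X)⁺ + (sup (-X))⁺`, convexity of `F` bounds `F (sup |X| / 2)` by the mean of
`G (sup X)` and `G (sup (-X))`, and these two have the same sum over all sign vectors by the
symmetry `σ ↦ -σ`.
-/

/-- The real sign encoded by a boolean: `true` is `1`, `false` is `-1`. -/
noncomputable abbrev boolSign (e : Bool) : ℝ := if e then (1 : ℝ) else -1

/-- Weak majorization of pairs: convex nondecreasing functions respect it. -/
lemma add_le_add_of_majorized {G : ℝ → ℝ} (hc : ConvexOn ℝ Set.univ G) (hm : Monotone G)
    {A B P Q : ℝ} (hA : A ≤ max P Q) (hB : B ≤ max P Q) (hAB : A + B ≤ P + Q) :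
    G A + G B ≤ G P + G Q := by
  wlog hPQ : Q ≤ P generalizing P Q
  · have := this (P := Q) (Q := P) (by rwa [max_comm]) (by rwa [max_comm]) (by linarith)
      (le_of_not_ge hPQ)
    linarith
  rw [max_eq_left hPQ] at hA hB
  by_cases hBQ : B ≤ Q
  · exact add_le_add (hm hA) (hm hBQ)
  by_cases hAQ : A ≤ Q
  · linarith [hm hB, hm hAQ]
  push Not at hBQ hAQ
  have hd : 0 < P - Q := by linarith
  -- `A` and `P + Q - A ≥ B` are the convex combinations of `P`, `Q` with swapped weights.
  set w := (A - Q) / (P - Q) with hw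
  have hwd : w * (P - Q) = A - Q := by rw [hw]; field_simp
  have hw0 : 0 ≤ w := div_nonneg (by linarith) hd.le
  have hw1 : 0 ≤ 1 - w := by
    have : w ≤ 1 := (div_le_one hd).2 (by linarith)
    linarith
  have h1 := hc.2 (Set.mem_univ P) (Set.mem_univ Q) hw0 hw1 (by ring)
  have h2 := hc.2 (Set.mem_univ P) (Set.mem_univ Q) hw1 hw0 (by ring)
  simp only [smul_eq_mul] at h1 h2
  rw [show w * P + (1 - w) * Q = A by linarith] at h1
  rw [show (1 - w) * P + w * Q = P + Q - A by linarith] at h2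
  have h3 : G B ≤ G (P + Q - A) := hm (by linarith)
  linarith

/-- The comparison for a single random sign. -/
lemma iSup_pair_le {I : Type*} [Nonempty I] {G : ℝ → ℝ} (hc : ConvexOn ℝ Set.univ G)
    (hm : Monotone G) {h a b : I → ℝ} (hab : ∀ s, |a s| ≤ |b s|)
    (hd : ∀ s t, |a s - a t| ≤ |b s - b t|)
    (hP : BddAbove (Set.range fun s => h s + b s))
    (hQ : BddAbove (Set.range fun s => h s - b s)) :
    G (⨆ s, (h s + a s)) + G (⨆ s, (h s - a s)) ≤
      G (⨆ s, (h s + b s)) + G (⨆ s, (h s - b s)) := by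
  have p : ∀ s, h s + b s ≤ ⨆ s, (h s + b s) := fun s => le_ciSup hP s
  have q : ∀ s, h s - b s ≤ ⨆ s, (h s - b s) := fun s => le_ciSup hQ s
  have hmax : ∀ s, h s + |b s| ≤ max (⨆ s, (h s + b s)) (⨆ s, (h s - b s)) := by
    intro s
    rcases abs_cases (b s) with ⟨e, -⟩ | ⟨e, -⟩
    · rw [e]; exact le_max_of_le_left (p s)
    · rw [e]; exact le_max_of_le_right (q s)
  refine add_le_add_of_majorized hc hm (ciSup_le fun s => ?_) (ciSup_le fun s => ?_) ?_
  · linarith [hmax s, hab s, le_abs_self (a s)]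
  · linarith [hmax s, hab s, neg_abs_le (a s)]
  · refine le_sub_iff_add_le.1 (ciSup_le fun s => ?_)
    rw [le_sub_comm]
    refine ciSup_le fun t => ?_
    have h1 := (le_abs_self _).trans (hd s t)
    rcases abs_cases (b s - b t) with ⟨e, -⟩ | ⟨e, -⟩
    · linarith [p s, q t]
    · linarith [q s, p t]

/-- Splitting off the first sign of a sum over sign vectors. -/
lemma sum_signs_succ {n : ℕ} (f : (Fin (n + 1) → Bool) → ℝ) :
    ∑ σ, f σ = ∑ σ : Fin n → Bool, (f (Fin.cons true σ) + f (Fin.cons false σ)) := by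
  rw [← (Fin.consEquiv fun _ : Fin (n + 1) => Bool).sum_comp, Fintype.sum_prod_type,
    Fintype.sum_bool, Finset.sum_add_distrib]
  rfl

lemma bounded_signed_sum {I : Type*} {n : ℕ} {b : Fin n → I → ℝ}
    (hb : ∀ i, ∃ C, ∀ s, |b i s| ≤ C) (σ : Fin n → Bool) :
    ∃ C, ∀ s, |∑ i, boolSign (σ i) * b i s| ≤ C := by
  choose C hC using hb
  refine ⟨∑ i, C i, fun s => (Finset.abs_sum_le_sum_abs _ _).trans ?_⟩
  refine Finset.sum_le_sum fun i _ => ?_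
  cases σ i <;> simpa using hC i s

/-- One-sided contraction. The bounded offset `h` makes the induction on `n` go through: it
absorbs the coordinates not currently under consideration. -/
lemma sum_signs_le {I : Type*} [Nonempty I] {G : ℝ → ℝ} (hc : ConvexOn ℝ Set.univ G)
    (hm : Monotone G) (n : ℕ) : ∀ (a b : Fin n → I → ℝ) (h : I → ℝ),
    (∀ i s, |a i s| ≤ |b i s|) → (∀ i s t, |a i s - a i t| ≤ |b i s - b i t|) →
    (∀ i, ∃ C, ∀ s, |b i s| ≤ C) → (∃ C, ∀ s, |h s| ≤ C) →
    ∑ σ : Fin n → Bool, G (⨆ s, (h s + ∑ i, boolSign (σ i) * a i s)) ≤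
      ∑ σ : Fin n → Bool, G (⨆ s, (h s + ∑ i, boolSign (σ i) * b i s)) := by
  induction n with
  | zero => intro a b h _ _ _ _; simp
  | succ n ih =>
    intro a b h hab hd hb ⟨H, hH⟩
    obtain ⟨C, hC⟩ := hb 0
    have hbound : ∀ s, |a 0 s| ≤ C := fun s => (hab 0 s).trans (hC s)
    have ih' := fun h' => ih (fun i => a i.succ) (fun i => b i.succ) h'
      (fun i => hab i.succ) (fun i => hd i.succ) (fun i => hb i.succ)
    have i1 := ih' (fun s => h s + a 0 s)
      ⟨H + C, fun s => (abs_add_le _ _).trans (add_le_add (hH s) (hbound s))⟩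
    have i2 := ih' (fun s => h s - a 0 s)
      ⟨H + C, fun s => (abs_sub _ _).trans (add_le_add (hH s) (hbound s))⟩
    rw [sum_signs_succ, sum_signs_succ]
    simp only [Fin.sum_univ_succ, Fin.cons_zero, Fin.cons_succ,
      show boolSign true = 1 from rfl, show boolSign false = -1 from rfl, one_mul, neg_one_mul]
    calc _ ≤ ∑ σ : Fin n → Bool,
          (G (⨆ s, (h s + a 0 s + ∑ i, boolSign (σ i) * b i.succ s)) +
            G (⨆ s, (h s - a 0 s + ∑ i, boolSign (σ i) * b i.succ s))) := by
          rw [Finset.sum_add_distrib, Finset.sum_add_distrib]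
          simp only [← add_assoc, ← sub_eq_add_neg]
          exact add_le_add i1 i2
      _ ≤ _ := by
          refine Finset.sum_le_sum fun σ _ => ?_
          obtain ⟨D, hD⟩ := bounded_signed_sum (fun i : Fin n => hb i.succ) σ
          have key := iSup_pair_le (h := fun s => h s + ∑ i, boolSign (σ i) * b i.succ s)
            hc hm (hab 0) (hd 0)
            ⟨H + D + C, by
              rintro _ ⟨s, rfl⟩
              linarith [(abs_le.1 (hH s)).2, (abs_le.1 (hD s)).2, (abs_le.1 (hC s)).2]⟩
            ⟨H + D + C, by
              rintro _ ⟨s, rfl⟩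
              linarith [(abs_le.1 (hH s)).2, (abs_le.1 (hD s)).2, (abs_le.1 (hC s)).1]⟩
          refine le_of_eq_of_le ?_ (key.trans_eq ?_) <;>
            exact congrArg₂ (· + ·) (congrArg G (iSup_congr fun s => by ring))
              (congrArg G (iSup_congr fun s => by ring))

lemma convexOn_comp_posPart {F : ℝ → ℝ} (hc : ConvexOn ℝ (Set.Ici (0 : ℝ)) F)
    (hm : MonotoneOn F (Set.Ici (0 : ℝ))) : ConvexOn ℝ Set.univ fun x => F (max x 0) := by
  refine ⟨convex_univ, fun x _ y _ u v hu hv huv => ?_⟩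
  have hx : (0 : ℝ) ≤ max x 0 := le_max_right _ _
  have hy : (0 : ℝ) ≤ max y 0 := le_max_right _ _
  refine le_trans (hm (Set.mem_Ici.2 (le_max_right _ _)) ?_ ?_) (hc.2 hx hy hu hv huv)
  · exact add_nonneg (mul_nonneg hu hx) (mul_nonneg hv hy)
  · refine max_le (add_le_add ?_ ?_) (add_nonneg (mul_nonneg hu hx) (mul_nonneg hv hy))
    · exact mul_le_mul_of_nonneg_left (le_max_left _ _) hu
    · exact mul_le_mul_of_nonneg_left (le_max_left _ _) hv

/-- Boundedness of all signed sums bounds each summand: flipping the sign of coordinate `j`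
changes the sum by twice that summand. -/
lemma bounded_of_bounded_signed_sums {I : Type*} {n : ℕ} {b : Fin n → I → ℝ}
    (hb : ∀ σ : Fin n → Bool, ∃ C, ∀ s, |∑ i, boolSign (σ i) * b i s| ≤ C) (j : Fin n) :
    ∃ C, ∀ s, |b j s| ≤ C := by
  obtain ⟨C, hC⟩ := hb fun _ => true
  obtain ⟨D, hD⟩ := hb (Function.update (fun _ => true) j false)
  refine ⟨(C + D) / 2, fun s => ?_⟩
  have h1 : ∑ i, boolSign true * b i s -
      ∑ i, boolSign (Function.update (fun _ => true) j false i) * b i s = 2 * b j s := by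
    rw [← Finset.sum_sub_distrib, Finset.sum_eq_single j]
    · simp; ring
    · intro i _ hij; simp [Function.update_of_ne hij]
    · simp
  have h2 := (abs_sub _ _).trans (add_le_add (hC s) (hD s))
  rw [h1, abs_mul, abs_two] at h2
  linarith


/-- Modified Ledoux–Talagrand contraction theorem: for `F : ℝ → ℝ` convex, nondecreasing
and nonnegative on `[0, ∞)`, and `φ_i : ℝ → ℝ` `L_i`-Lipschitz with `φ_i(0) = 0`,
averaging over all sign vectors `σ ∈ {−1, 1}ⁿ`,
`2⁻ⁿ ∑_σ F((1/2) sup_{s ∈ S} |∑ i, σ_i φ_i(s_i)|) ≤ 2⁻ⁿ ∑_σ F(sup_{s ∈ S} |∑ i, σ_i L_i s_i|)`. -/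
theorem ledoux_talagrand_contraction (n : ℕ) (F : ℝ → ℝ)
    (hF_convex : ConvexOn ℝ (Set.Ici (0 : ℝ)) F)
    (hF_mono : MonotoneOn F (Set.Ici (0 : ℝ)))
    (hF_nonneg : ∀ x : ℝ, 0 ≤ x → 0 ≤ F x)
    (φ : Fin n → ℝ → ℝ) (L : Fin n → ℝ) (hL : ∀ i, 0 ≤ L i)
    (hφ0 : ∀ i, φ i 0 = 0)
    (hφ_lip : ∀ i a b, |φ i a - φ i b| ≤ L i * |a - b|)
    (S : Set (Fin n → ℝ)) (hS : S.Nonempty)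
    (hbdd1 : ∀ σ : Fin n → Bool,
      BddAbove ((fun s => |∑ i, (if σ i then (1 : ℝ) else -1) * φ i (s i)|) '' S))
    (hbdd2 : ∀ σ : Fin n → Bool,
      BddAbove ((fun s => |∑ i, (if σ i then (1 : ℝ) else -1) * (L i * s i)|) '' S)) :
    (1 / 2 ^ n) * ∑ σ : Fin n → Bool,
        F ((1 / 2) * sSup ((fun s => |∑ i, (if σ i then (1 : ℝ) else -1) * φ i (s i)|) '' S)) ≤
      (1 / 2 ^ n) * ∑ σ : Fin n → Bool,
        F (sSup ((fun s => |∑ i, (if σ i then (1 : ℝ) else -1) * (L i * s i)|) '' S)) := by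
  have : Nonempty S := hS.to_subtype
  set a : Fin n → S → ℝ := fun i s => φ i (s.1 i) with ha
  set b : Fin n → S → ℝ := fun i s => L i * s.1 i with hb
  have hd : ∀ i s t, |a i s - a i t| ≤ |b i s - b i t| := fun i s t => by
    rw [hb, ← mul_sub, abs_mul, abs_of_nonneg (hL i)]
    exact hφ_lip i _ _
  have hab : ∀ i s, |a i s| ≤ |b i s| := fun i s => by
    simpa [ha, hb, hφ0, abs_mul, abs_of_nonneg (hL i)] using hφ_lip i (s.1 i) 0
  have hsum : ∀ σ : Fin n → Bool, ∃ C, ∀ s, |∑ i, boolSign (σ i) * b i s| ≤ C := fun σ => by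
    obtain ⟨C, hC⟩ := hbdd2 σ
    exact ⟨C, fun s => hC ⟨s.1, s.2, rfl⟩⟩
  have hbb := bounded_of_bounded_signed_sums hsum
  have haa : ∀ i, ∃ C, ∀ s, |a i s| ≤ C := fun i => by
    obtain ⟨C, hC⟩ := hbb i
    exact ⟨C, fun s => (hab i s).trans (hC s)⟩
  set G : ℝ → ℝ := fun x => F (max x 0) with hG
  have hGm : Monotone G := fun x y hxy =>
    hF_mono (Set.mem_Ici.2 (le_max_right _ _)) (Set.mem_Ici.2 (le_max_right _ _))
      (max_le_max_right 0 hxy)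
  have main := sum_signs_le (convexOn_comp_posPart hF_convex hF_mono) hGm n a b (fun _ => 0)
    hab hd hbb ⟨0, by simp⟩
  simp only [zero_add] at main
  -- `σ ↦ -σ` turns `sup X` into `sup (-X)`.
  have hsymm : ∑ σ : Fin n → Bool, G (⨆ s, -∑ i, boolSign (σ i) * a i s) =
      ∑ σ : Fin n → Bool, G (⨆ s, ∑ i, boolSign (σ i) * a i s) := by
    rw [← (Equiv.piCongrRight fun _ : Fin n => Equiv.boolNot).sum_comp]
    refine Finset.sum_congr rfl fun σ _ => ?_
    congr 2
    funext s
    rw [← Finset.sum_neg_distrib]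
    refine Finset.sum_congr rfl fun i _ => ?_
    cases h : σ i <;> simp [h]
  have hleft : ∀ σ : Fin n → Bool,
      F ((1 / 2) * ⨆ s, |∑ i, boolSign (σ i) * a i s|) ≤
        1 / 2 * G (⨆ s, ∑ i, boolSign (σ i) * a i s) +
          1 / 2 * G (⨆ s, -∑ i, boolSign (σ i) * a i s) := fun σ => by
    obtain ⟨C, hC⟩ := bounded_signed_sum haa σ
    set X : S → ℝ := fun s => ∑ i, boolSign (σ i) * a i s with hX
    have hp : ∀ s, X s ≤ ⨆ s, X s := fun s => le_ciSup (f := X)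
      ⟨C, by rintro _ ⟨t, rfl⟩; exact (abs_le.1 (hC t)).2⟩ s
    have hq : ∀ s, -X s ≤ ⨆ s, -X s := fun s => le_ciSup (f := fun s => -X s)
      ⟨C, by rintro _ ⟨t, rfl⟩; exact neg_le.1 (abs_le.1 (hC t)).1⟩ s
    have hp0 : (0 : ℝ) ≤ max (⨆ s, X s) 0 := le_max_right _ _
    have hq0 : (0 : ℝ) ≤ max (⨆ s, -X s) 0 := le_max_right _ _
    have hle : (⨆ s, |X s|) ≤ max (⨆ s, X s) 0 + max (⨆ s, -X s) 0 := ciSup_le fun s =>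
      abs_le'.2 ⟨by linarith [hp s, le_max_left (⨆ s, X s) 0],
        by linarith [hq s, le_max_left (⨆ s, -X s) 0]⟩
    have hnn : 0 ≤ ⨆ s, |X s| := Real.iSup_nonneg fun s => abs_nonneg _
    refine le_trans (hF_mono ?_ ?_ ?_)
      (hF_convex.2 hp0 hq0 (by norm_num : (0 : ℝ) ≤ 1 / 2) (by norm_num : (0 : ℝ) ≤ 1 / 2)
        (by norm_num))
    · exact mul_nonneg (by norm_num) hnn
    · simp only [smul_eq_mul, Set.mem_Ici]; positivity
    · simp only [smul_eq_mul]; linarith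
  have hright : ∀ σ : Fin n → Bool, G (⨆ s, ∑ i, boolSign (σ i) * b i s) ≤
      F (⨆ s, |∑ i, boolSign (σ i) * b i s|) := fun σ => by
    obtain ⟨C, hC⟩ := hsum σ
    have hnn : 0 ≤ ⨆ s, |∑ i, boolSign (σ i) * b i s| := Real.iSup_nonneg fun s => abs_nonneg _
    refine hF_mono (Set.mem_Ici.2 (le_max_right _ _)) hnn (max_le (ciSup_le fun s => ?_) hnn)
    exact (le_abs_self _).trans (le_ciSup (f := fun s => |∑ i, boolSign (σ i) * b i s|)
      ⟨C, by rintro _ ⟨t, rfl⟩; exact hC t⟩ s)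
  refine mul_le_mul_of_nonneg_left ?_ (by positivity)
  simp only [sSup_image']
  calc _ ≤ ∑ σ : Fin n → Bool, (1 / 2 * G (⨆ s, ∑ i, boolSign (σ i) * a i s) +
          1 / 2 * G (⨆ s, -∑ i, boolSign (σ i) * a i s)) :=
        Finset.sum_le_sum fun σ _ => hleft σ
    _ = ∑ σ : Fin n → Bool, G (⨆ s, ∑ i, boolSign (σ i) * a i s) := by
        rw [Finset.sum_add_distrib, ← Finset.mul_sum, ← Finset.mul_sum, hsymm]
        ring
    _ ≤ _ := main.trans (Finset.sum_le_sum fun σ _ => hright σ)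
end

section
/- Let (X, μ) be a measure space, m, K positive integers, and F a real-valued functional on m-tuples of probability densities on X. Suppose F is jointly linearly convex with first variation G = (G_1, …, G_m): for all m-tuples ρ, ρ' of probability densities, F(ρ') ≥ F(ρ) + ∑_{j=1}^{m} ∫_X G_j(ρ)(x) (ρ'_j(x) − ρ_j(x)) dμ(x), and suppose moreover that sup over all tuples ρ of ‖G_j(ρ)‖_{L^∞(μ)} ≤ L_j for constants L_j ≥ 0. Given step sizes η_1, …, η_K > 0 and an initial m-tuple ρ⁰ of strictly positive probability densities, define the coordinate KL divergence gradient descent iterates by ρ^k_j = ρ^{k−1}_j e^{−η_k G_j(ρ^{k−1})} / (∫_X ρ^{k−1}_j e^{−η_k G_j(ρ^{k−1})} dμ) for k = 1, …, K and j = 1, …, m. Then for every m-tuple ρ of probability densities: min_{0 ≤ k ≤ K−1} F(ρ^k) − F(ρ) ≤ KL(ρ ‖ ρ⁰) / (η_1 + ⋯ + η_K) + (∑_{k=1}^{K} η_k²)(∑_{j=1}^{m} L_j²) / (2(η_1 + ⋯ + η_K)), where KL(ρ ‖ ρ⁰) = ∑_{j=1}^{m} ∫_X ρ_j log(ρ_j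 / ρ⁰_j) dμ. -/
/-!
Fix a competitor `ρ` and track the potential `D_k = ∑ j, KL(ρ_j ‖ ρ^k_j)`. One multiplicative update
of a coordinate with normalising constant `Z` changes it by exactly `η ∫ G ρ_j dμ + log Z`, and
Hoeffding's lemma for the probability measure `ρ^k_j μ` gives `log Z ≤ -η ∫ G ρ^k_j dμ + η² L_j² / 2`
(`IsProbDensity.integral_mul_exp_le`). Summing over `j` and using convexity,
`D_{k+1} ≤ D_k - η (F(ρ^k) - F(ρ)) + η² (∑ j, L_j²) / 2` (from `kl_step`). Telescoping and `D_K ≥ 0`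
(`IsProbDensity.kl_nonneg`) bound the `η`-weighted sum of the gaps `F(ρ^k) - F(ρ)`, so the gaps cannot
all exceed the claimed bound.

The functions `G ρ j` are not assumed measurable. Along the iterates this is automatic: the
update rule expresses `G (ρ^k) j` through the logarithm of `ρ^{k+1}_j / ρ^k_j`.
-/

open MeasureTheory Real

namespace IsProbDensity

variable {X : Type*} [MeasurableSpace X] {μ : Measure X} {p q : X → ℝ}

lemma integrable_s13 (hp : IsProbDensity μ p) : Integrable p μ :=
  integrable_of_integral_eq_one hp.2.2

lemma isProbabilityMeasure (hp : IsProbDensity μ p) :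
    IsProbabilityMeasure (μ.withDensity fun x => ENNReal.ofReal (p x)) := by
  constructor
  rw [withDensity_apply _ MeasurableSet.univ, Measure.restrict_univ,
    ← ofReal_integral_eq_lintegral_ofReal hp.integrable_s13 (ae_of_all _ hp.2.1), hp.2.2,
    ENNReal.ofReal_one]

lemma integral_withDensity (hp : IsProbDensity μ p) (f : X → ℝ) :
    ∫ x, f x ∂(μ.withDensity fun x => ENNReal.ofReal (p x)) = ∫ x, p x * f x ∂μ := by
  rw [integral_withDensity_eq_integral_toReal_smul hp.1.ennreal_ofReal (by simp)]
  refine integral_congr_ae (ae_of_all _ fun x => ?_)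
  simp [ENNReal.toReal_ofReal (hp.2.1 x)]

/-- Hoeffding's lemma for the measure with density `p`. -/
lemma integral_mul_exp_le (hp : IsProbDensity μ p) {g : X → ℝ} (hg : Measurable g)
    {L : ℝ} (hL : 0 ≤ L) (hb : ∀ᵐ x ∂μ, |g x| ≤ L) (t : ℝ) :
    ∫ x, p x * exp (-t * g x) ∂μ ≤ exp (-t * (∫ x, g x * p x ∂μ) + t ^ 2 * L ^ 2 / 2) := by
  set ν := μ.withDensity fun x => ENNReal.ofReal (p x)
  have : IsProbabilityMeasure ν := hp.isProbabilityMeasure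
  have hb' : ∀ᵐ x ∂ν, g x ∈ Set.Icc (-L) L :=
    (withDensity_absolutelyContinuous μ _).ae_le (hb.mono fun x hx => abs_le.mp hx)
  have h := (ProbabilityTheory.hasSubgaussianMGF_of_mem_Icc hg.aemeasurable hb').mgf_le (-t)
  have hc : (((‖L - -L‖₊ / 2) ^ 2 : NNReal) : ℝ) = L ^ 2 := by
    simp only [NNReal.coe_pow, NNReal.coe_div, coe_nnnorm, norm_eq_abs, NNReal.coe_ofNat]
    rw [abs_of_nonneg (by linarith)]
    ring
  have hm : ∫ x, g x * p x ∂μ = ∫ x, g x ∂ν := by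
    rw [hp.integral_withDensity]
    simp only [mul_comm]
  rw [hc, ProbabilityTheory.mgf] at h
  rw [hm, ← hp.integral_withDensity (fun x => exp (-t * g x)), exp_add]
  have he : ∀ x, exp (-t * g x) = exp (-t * ∫ x, g x ∂ν) * exp (-t * (g x - ∫ x, g x ∂ν)) := by
    intro x
    rw [← exp_add]
    ring_nf
  simp_rw [he]
  rw [integral_const_mul]
  refine mul_le_mul_of_nonneg_left (h.trans (le_of_eq ?_)) (exp_pos _).le
  ring_nf

/-- Gibbs' inequality. -/
lemma kl_nonneg (hp : IsProbDensity μ p) (hq : IsProbDensity μ q) (hq0 : ∀ x, 0 < q x)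
    (hi : Integrable (fun x => p x * log (p x / q x)) μ) :
    0 ≤ ∫ x, p x * log (p x / q x) ∂μ := by
  have h : ∫ x, (p x - q x) ∂μ ≤ ∫ x, p x * log (p x / q x) ∂μ := by
    refine integral_mono (hp.integrable_s13.sub hq.integrable_s13) hi fun x => ?_
    rcases (hp.2.1 x).eq_or_lt with h0 | h0
    · simp [← h0, (hq0 x).le]
    · have h1 := mul_le_mul_of_nonneg_left
        (one_sub_inv_le_log_of_pos (div_pos h0 (hq0 x))) h0.le
      have h2 : p x * (1 - (p x / q x)⁻¹) = p x - q x := by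
        field_simp
      exact h2 ▸ h1
  rwa [integral_sub hp.integrable_s13 hq.integrable_s13, hp.2.2, hq.2.2, sub_self] at h

end IsProbDensity

/-- One multiplicative update `q ↦ q'` of a single coordinate: positivity and finiteness of the KL
divergence from `p` persist, and the divergence changes by at most the linear term plus the
Hoeffding error. Measurability of `g` follows from that of `q` and `q'`. -/
lemma kl_step {X : Type*} [MeasurableSpace X] {μ : Measure X} {p q q' g : X → ℝ}
    (hp : IsProbDensity μ p) (hq : IsProbDensity μ q) (hq' : IsProbDensity μ q')
    (hq0 : ∀ x, 0 < q x) {L t : ℝ} (hL : 0 ≤ L) (ht : 0 < t) (hb : ∀ᵐ x ∂μ, |g x| ≤ L)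
    (hup : q' = fun x => q x * exp (-t * g x) / ∫ y, q y * exp (-t * g y) ∂μ)
    (hi : Integrable (fun x => p x * log (p x / q x)) μ) :
    (∀ x, 0 < q' x) ∧ Integrable (fun x => p x * log (p x / q' x)) μ ∧
      ∫ x, p x * log (p x / q' x) ∂μ ≤ ∫ x, p x * log (p x / q x) ∂μ +
        t * (∫ x, g x * (p x - q x) ∂μ) + t ^ 2 * L ^ 2 / 2 := by
  set Z := ∫ y, q y * exp (-t * g y) ∂μ with hZ
  have hZ0 : 0 < Z := by
    refine lt_of_le_of_ne
      (integral_nonneg fun x => mul_nonneg (hq0 x).le (exp_pos _).le) fun h => ?_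
    -- if `Z = 0`, division by zero makes `q'` vanish identically, against `∫ q' = 1`
    have h1 := hq'.2.2
    simp [hup, ← h] at h1
  have hq'0 : ∀ x, 0 < q' x := fun x => by
    rw [hup]
    exact div_pos (mul_pos (hq0 x) (exp_pos _)) hZ0
  have hlog : ∀ x, log (q' x) = log (q x) - t * g x - log Z := fun x => by
    rw [hup]
    simp only
    rw [log_div (mul_pos (hq0 x) (exp_pos _)).ne' hZ0.ne',
      log_mul (hq0 x).ne' (exp_pos _).ne', log_exp]
    ring
  have hg : Measurable g := by
    have : g = fun x => (log (q x) - log Z - log (q' x)) / t := by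
      funext x
      rw [hlog]
      field_simp
      ring
    rw [this]
    exact ((hq.1.log.sub_const _).sub hq'.1.log).div_const _
  have hgp : Integrable (fun x => g x * p x) μ :=
    hp.integrable_s13.bdd_mul hg.aestronglyMeasurable hb
  have hgq : Integrable (fun x => g x * q x) μ :=
    hq.integrable_s13.bdd_mul hg.aestronglyMeasurable hb
  have hpt : (fun x => p x * log (p x / q' x)) =
      fun x => p x * log (p x / q x) + t * (g x * p x) + log Z * p x := by
    funext x
    rcases (hp.2.1 x).eq_or_lt with h0 | h0
    · simp [← h0]
    · rw [log_div h0.ne' (hq'0 x).ne', log_div h0.ne' (hq0 x).ne', hlog]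
      ring
  have hlogZ : log Z ≤ -t * (∫ x, g x * q x ∂μ) + t ^ 2 * L ^ 2 / 2 :=
    (log_le_iff_le_exp hZ0).2 (hq.integral_mul_exp_le hg hL hb t)
  have hi1 : Integrable (fun x => p x * log (p x / q x) + t * (g x * p x)) μ :=
    hi.add (hgp.const_mul t)
  refine ⟨hq'0, ?_, ?_⟩
  · rw [hpt]
    exact hi1.add (hp.integrable_s13.const_mul _)
  · rw [hpt, integral_add hi1 (hp.integrable_s13.const_mul _), integral_add hi (hgp.const_mul t),
      integral_const_mul, integral_const_mul, hp.2.2]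
    simp only [mul_sub]
    rw [integral_sub hgp hgq]
    linarith

lemma sum_Icc_one_eq_sum_range (f : ℕ → ℝ) (n : ℕ) :
    ∑ k ∈ Finset.Icc 1 n, f k = ∑ k ∈ Finset.range n, f (k + 1) := by
  induction n with
  | zero => simp
  | succ n ih => rw [Finset.sum_Icc_succ_top (by omega), Finset.sum_range_succ, ih]

/-- Convergence of the coordinate KL divergence gradient descent (CKLGD) algorithm for a
jointly linearly convex functional `F` with first variation `G` uniformly bounded by `L_j`:
`min_{0 ≤ k ≤ K−1} F(ρ^k) − F(ρ) ≤ KL(ρ‖ρ⁰)/(η₁+⋯+η_K) + (∑ η_k²)(∑ L_j²)/(2(η₁+⋯+η_K))`. -/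
theorem cklgd_convergence {X : Type*} [MeasurableSpace X] (μ : Measure X)
    (m K : ℕ) (hm : 0 < m) (hK : 0 < K)
    (F : (Fin m → X → ℝ) → ℝ) (G : (Fin m → X → ℝ) → Fin m → X → ℝ)
    (L : Fin m → ℝ) (hL : ∀ j, 0 ≤ L j)
    (hconvex : ∀ ρ ρ' : Fin m → X → ℝ, (∀ j, IsProbDensity μ (ρ j)) →
      (∀ j, IsProbDensity μ (ρ' j)) →
      F ρ + ∑ j, ∫ x, G ρ j x * (ρ' j x - ρ j x) ∂μ ≤ F ρ')
    (hbound : ∀ ρ : Fin m → X → ℝ, (∀ j, IsProbDensity μ (ρ j)) →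
      ∀ j, ∀ᵐ x ∂μ, |G ρ j x| ≤ L j)
    (η : ℕ → ℝ) (hη_pos : ∀ k, 1 ≤ k → k ≤ K → 0 < η k)
    (ρseq : ℕ → Fin m → X → ℝ)
    (hinit_pos : ∀ j x, 0 < ρseq 0 j x)
    (hdens : ∀ k, k ≤ K → ∀ j, IsProbDensity μ (ρseq k j))
    (hiter : ∀ k, k < K → ∀ j, ρseq (k + 1) j = fun x =>
      ρseq k j x * Real.exp (-η (k + 1) * G (ρseq k) j x) /
        ∫ y, ρseq k j y * Real.exp (-η (k + 1) * G (ρseq k) j y) ∂μ) :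
    ∀ ρ : Fin m → X → ℝ, (∀ j, IsProbDensity μ (ρ j)) →
      (∀ j, Integrable (fun x => ρ j x * Real.log (ρ j x / ρseq 0 j x)) μ) →
      ∃ k, k < K ∧ F (ρseq k) - F ρ ≤
        (∑ j, ∫ x, ρ j x * Real.log (ρ j x / ρseq 0 j x) ∂μ) /
            (∑ k ∈ Finset.Icc 1 K, η k) +
          ((∑ k ∈ Finset.Icc 1 K, (η k) ^ 2) * (∑ j, (L j) ^ 2)) /
            (2 * ∑ k ∈ Finset.Icc 1 K, η k) := by
  intro ρ hρ hint
  set S := ∑ j, (L j) ^ 2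
  have inv : ∀ n, n ≤ K → (∀ j x, 0 < ρseq n j x) ∧
      (∀ j, Integrable (fun x => ρ j x * Real.log (ρ j x / ρseq n j x)) μ) ∧
      (∑ j, ∫ x, ρ j x * Real.log (ρ j x / ρseq n j x) ∂μ) +
        ∑ k ∈ Finset.range n, η (k + 1) * (F (ρseq k) - F ρ) ≤
      (∑ j, ∫ x, ρ j x * Real.log (ρ j x / ρseq 0 j x) ∂μ) +
        (∑ k ∈ Finset.range n, (η (k + 1)) ^ 2) * S / 2 := by
    intro n
    induction n with
    | zero => exact fun _ => ⟨hinit_pos, hint, by simp⟩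
    | succ n ih =>
      intro hn
      obtain ⟨hpos, hin, hle⟩ := ih (by omega)
      have ht := hη_pos (n + 1) (by omega) hn
      have hstep := fun j => kl_step (hρ j) (hdens n (by omega) j) (hdens (n + 1) hn j) (hpos j)
        (hL j) ht (hbound _ (hdens n (by omega)) j) (hiter n hn j) (hin j)
      refine ⟨fun j => (hstep j).1, fun j => (hstep j).2.1, ?_⟩
      have hsum := Finset.sum_le_sum fun j (_ : j ∈ Finset.univ) => (hstep j).2.2
      rw [Finset.sum_add_distrib, Finset.sum_add_distrib, ← Finset.mul_sum, ← Finset.sum_div,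
        ← Finset.mul_sum] at hsum
      have hc := mul_le_mul_of_nonneg_left
        (hconvex (ρseq n) ρ (hdens n (by omega)) hρ) ht.le
      rw [Finset.sum_range_succ, Finset.sum_range_succ]
      change _ ≤ _ + η (n + 1) ^ 2 * S / 2 at hsum
      linarith
  obtain ⟨hpos, hin, hle⟩ := inv K le_rfl
  have hD : 0 ≤ ∑ j, ∫ x, ρ j x * Real.log (ρ j x / ρseq K j x) ∂μ :=
    Finset.sum_nonneg fun j _ => (hρ j).kl_nonneg (hdens K le_rfl j) (hpos j) (hin j)
  have hne : (Finset.range K).Nonempty := Finset.nonempty_range_iff.2 hK.ne'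
  have hη : ∀ k ∈ Finset.range K, 0 < η (k + 1) := fun k hk =>
    hη_pos _ (by omega) (by have := Finset.mem_range.1 hk; omega)
  rw [sum_Icc_one_eq_sum_range, sum_Icc_one_eq_sum_range (fun k => η k ^ 2)]
  have hH : 0 < ∑ k ∈ Finset.range K, η (k + 1) := Finset.sum_pos hη hne
  set H := ∑ k ∈ Finset.range K, η (k + 1) with hHdef
  by_contra! hcon
  have hlt := Finset.sum_lt_sum_of_nonempty hne fun k hk =>
    mul_lt_mul_of_pos_left (hcon k (Finset.mem_range.1 hk)) (hη k hk)
  rw [← Finset.sum_mul, ← hHdef] at hlt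
  have hB : ∀ a b : ℝ, H * (a / H + b / (2 * H)) = a + b / 2 := fun a b => by
    field_simp
  rw [hB] at hlt
  linarith
end

section
/- Let (X, μ) be a measure space, m a positive integer, T > 0, and F a real-valued functional on m-tuples of probability densities on X that is jointly linearly convex with first variation G = (G_1, …, G_m): for all m-tuples ρ, ρ' of probability densities, F(ρ') ≥ F(ρ) + ∑_{j=1}^{m} ∫_X G_j(ρ)(x) (ρ'_j(x) − ρ_j(x)) dμ(x). Let ρ* be a global minimizer of F with F* = F(ρ*), and let t ↦ ρ(t) = (ρ_1(t), …, ρ_m(t)), t ∈ [0, T], be a curve of strictly positive probability densities solving the KL divergence gradient flow: for each j and each x, t ↦ ρ_j(t)(x) is differentiable with (d/dt) log ρ_j(t)(x) = −G_j(ρ(t))(x) + ∫_X G_j(ρ(t)) ρ_j(t) dμ. Assume in addition that differentiation under the integral sign is valid, i.e. t ↦ KL(ρ* ‖ ρ(t)) is differentiable with derivative −∑_{j=1}^{m} ∫_X (d/dt) log ρ_j(t)(x) · ρ*_j(x) dμ(x), and that KL(ρ* ‖ ρ(0)) < ∞. Then inf_{0 ≤ t ≤ T} F(ρ(t)) − F*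 ≤ KL(ρ* ‖ ρ(0)) / T. -/
/-!
Along the flow, `d/dt KL(ρ* ‖ ρ(t)) = ∑ j, ∫ G_j(ρ(t)) (ρ*_j - ρ_j(t)) ≤ F* - F(ρ(t))` by convexity.
The mean value theorem on `[0, T]` gives a time `c` with
`F(ρ(c)) - F* ≤ (KL(ρ* ‖ ρ(0)) - KL(ρ* ‖ ρ(T))) / T`, and `KL(ρ* ‖ ρ(T)) ≥ 0` by Gibbs' inequality
(`integral_kl_nonneg`).

The first variation is not assumed bounded, so the identity above needs `G_j(ρ(t)) ρ_j(t)` to be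
integrable: given this, `G_j(ρ(t)) ρ*_j` is either integrable, and the identity is linearity of the
integral, or not, and then both integrals are `0` by convention. The integrability is forced by
`F` being finite and having a subgradient at every density (`integrable_subgradient_mul`). If
`g = G_j(ρ)` had `∫ |g| ρ = ∞`, say on `{g ≥ N}`, densities obtained from `ρ` by moving mass between
a set where `g` is bounded and far slabs `{a ≤ g < b}` would have arbitrarily large `F`. A gliding
hump choice of the slabs (`hump_seq`) gives an increasing sequence of such modifications `p_k` with
`F(p_k) → ∞` and a limit `p` such that for every `k` the integral `∫ G(p_k) (p - p_k)` either has
absolute value at most `2` or has a non-integrable integrand and is `0` by convention. Hence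
`F(p) ≥ F(p_k) - 2` for all `k`, which is absurd (`no_infinite_tail`).
-/

open MeasureTheory Real

/-! ### Gliding hump -/

section Auxiliary

open Filter Topology

/-- The superlevel set `{h ≥ a}`. -/
def tailSet {X : Type*} (h : X → ℝ) (a : ℕ) : Set X := {x | (a : ℝ) ≤ h x}

/-- The slab `{a ≤ h < b}`. -/
def slab {X : Type*} (h : X → ℝ) (a b : ℕ) : Set X := {x | (a : ℝ) ≤ h x ∧ h x < b}

section Tails

lemma tailSet_antitone {X : Type*} {h : X → ℝ} : Antitone (tailSet h) := by
  intro a b hab x hx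
  have : (a : ℝ) ≤ b := by exact_mod_cast hab
  exact this.trans hx

lemma slab_subset_tailSet {X : Type*} {h : X → ℝ} (a b : ℕ) : slab h a b ⊆ tailSet h a := fun _ hx => hx.1

lemma iInter_tailSet {X : Type*} {h : X → ℝ} : ⋂ n, tailSet h n = ∅ := by
  ext x
  simp only [Set.mem_iInter, Set.mem_empty_iff_false, iff_false, not_forall]
  obtain ⟨n, hn⟩ := exists_nat_gt (h x)
  exact ⟨n, not_le.mpr hn⟩


variable {X : Type*} [MeasurableSpace X] {μ : Measure X} {h : X → ℝ}

lemma measurableSet_tailSet (hh : Measurable h) (a : ℕ) : MeasurableSet (tailSet h a) :=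
  measurableSet_le measurable_const hh

lemma measurableSet_slab (hh : Measurable h) (a b : ℕ) : MeasurableSet (slab h a b) :=
  (measurableSet_le measurable_const hh).inter (measurableSet_lt hh measurable_const)

/-- An integral over `U ∩ {h ≥ n}` vanishes as `n → ∞`, because `h` is finite everywhere. -/
lemma tail_small (hh : Measurable h) {f : X → ℝ} {U : Set X} (hU : MeasurableSet U) {a₀ : ℕ}
    (hf : IntegrableOn f (U ∩ tailSet h a₀) μ) {δ : ℝ} (hδ : 0 < δ) :
    ∀ᶠ n : ℕ in atTop,
      IntegrableOn f (U ∩ tailSet h n) μ ∧ ∫ x in U ∩ tailSet h n, ‖f x‖ ∂μ ≤ δ := by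
  have h1 := tendsto_setIntegral_of_antitone (f := fun x => ‖f x‖) (μ := μ)
    (s := fun n => U ∩ tailSet h n) (fun n => hU.inter (measurableSet_tailSet hh n))
    (fun a b hab => Set.inter_subset_inter_right _ (tailSet_antitone hab)) ⟨a₀, hf.norm⟩
  rw [← Set.inter_iInter, iInter_tailSet] at h1
  simp only [Set.inter_empty, Measure.restrict_empty, integral_zero_measure] at h1
  filter_upwards [h1.eventually (ge_mem_nhds hδ), eventually_ge_atTop a₀] with n hn hna
  exact ⟨hf.mono_set (Set.inter_subset_inter_right _ (tailSet_antitone hna)), hn⟩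

lemma slab_big (hh : Measurable h) {f : X → ℝ} {a : ℕ}
    (hf : ¬ IntegrableOn f (tailSet h a) μ) :
    ∀ᶠ b : ℕ in atTop,
      ¬ (IntegrableOn f (slab h a b) μ ∧ ∫ x in slab h a b, ‖f x‖ ∂μ ≤ 1) := by
  by_contra hcon
  apply hf
  have hall : ∀ b : ℕ, IntegrableOn f (slab h a b) μ ∧ ∫ x in slab h a b, ‖f x‖ ∂μ ≤ 1 := by
    intro b
    have hcon' : ∃ᶠ b : ℕ in atTop,
        (IntegrableOn f (slab h a b) μ ∧ ∫ x in slab h a b, ‖f x‖ ∂μ ≤ 1) := by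
      intro h'; exact hcon h'
    obtain ⟨c, hbc, hc1, hc2⟩ := (frequently_atTop.1 hcon') b
    have hsub : slab h a b ⊆ slab h a c := fun x hx =>
      ⟨hx.1, hx.2.trans_le (by exact_mod_cast hbc)⟩
    exact ⟨hc1.mono_set hsub, (setIntegral_mono_set hc1.norm
      (Eventually.of_forall fun x => norm_nonneg _) hsub.eventuallyLE).trans hc2⟩
  have hcov : AECover (μ.restrict (tailSet h a)) atTop (fun b : ℕ => {x | h x < b}) := by
    refine ⟨Eventually.of_forall fun x => ?_, fun b => measurableSet_lt hh measurable_const⟩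
    obtain ⟨n, hn⟩ := exists_nat_gt (h x)
    filter_upwards [eventually_ge_atTop n] with b hb
    exact hn.trans_le (by exact_mod_cast hb)
  have hres : ∀ b : ℕ, (μ.restrict (tailSet h a)).restrict {x | h x < b}
      = μ.restrict (slab h a b) := by
    intro b
    rw [Measure.restrict_restrict (measurableSet_lt hh measurable_const)]
    congr 1
    ext x
    simp only [slab, tailSet, Set.mem_inter_iff, Set.mem_ofPred_eq]
    tauto
  refine hcov.integrable_of_integral_norm_bounded 1 (fun b => ?_) (Eventually.of_forall fun b => ?_)
  · rw [IntegrableOn, hres]; exact (hall b).1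
  · rw [hres]; exact (hall b).2

/-- One step of the gliding hump: beyond any level there is a slab which, for each of finitely many
functions `Φ S`, either lies in a tail on which `Φ S` has small integral, or carries a
non-negligible part of `Φ S`. -/
lemma hump_step (hh : Measurable h) {ρ : X → ℝ} (hρ : IsProbDensity μ ρ)
    (Φ : Set X → X → ℝ) (κ : Set X → ℝ) (hκ : ∀ S, 0 < κ S) (N : ℕ) (L : Finset (Set X)) :
    ∃ a b : ℕ, N ≤ a ∧ a < b ∧ ∀ S ∈ L,
      ((∃ n, IntegrableOn (Φ S) (tailSet h n) μ) →
        IntegrableOn (Φ S) (tailSet h a) μ ∧ ∫ x in tailSet h a, ‖Φ S x‖ ∂μ ≤ 1) ∧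
      ((¬ ∃ n, IntegrableOn (Φ S) (tailSet h n) μ) →
        ¬ (IntegrableOn (Φ S) (slab h a b) μ ∧ ∫ x in slab h a b, ‖Φ S x‖ ∂μ ≤ 1)) ∧
      ∫ x in tailSet h a, ρ x ∂μ ≤ κ S := by
  have hA : ∀ᶠ a : ℕ in atTop, ∀ S ∈ L,
      ((∃ n, IntegrableOn (Φ S) (tailSet h n) μ) →
        IntegrableOn (Φ S) (tailSet h a) μ ∧ ∫ x in tailSet h a, ‖Φ S x‖ ∂μ ≤ 1) ∧
      ∫ x in tailSet h a, ρ x ∂μ ≤ κ S := by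
    rw [Filter.eventually_all_finset]
    intro S _
    refine Eventually.and ?_ ?_
    · by_cases hS : ∃ n, IntegrableOn (Φ S) (tailSet h n) μ
      · obtain ⟨n, hn⟩ := hS
        have := tail_small (U := Set.univ) (a₀ := n) hh MeasurableSet.univ
          (by simpa using hn) one_pos
        simp only [Set.univ_inter] at this
        filter_upwards [this] with a ha _ using ha
      · exact Eventually.of_forall fun a h' => absurd h' hS
    · have := tail_small (f := ρ) (μ := μ) (U := Set.univ) (a₀ := 0) hh MeasurableSet.univ
          (integrable_of_integral_eq_one hρ.2.2).integrableOn (hκ S)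
      simp only [Set.univ_inter] at this
      filter_upwards [this] with a ha
      simpa [abs_of_nonneg (hρ.2.1 _)] using ha.2
  obtain ⟨a, ha, hNa⟩ := (hA.and (eventually_ge_atTop N)).exists
  have hB : ∀ᶠ b : ℕ in atTop, ∀ S ∈ L, ((¬ ∃ n, IntegrableOn (Φ S) (tailSet h n) μ) →
        ¬ (IntegrableOn (Φ S) (slab h a b) μ ∧ ∫ x in slab h a b, ‖Φ S x‖ ∂μ ≤ 1)) := by
    rw [Filter.eventually_all_finset]
    intro S _
    by_cases hS : ∃ n, IntegrableOn (Φ S) (tailSet h n) μ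
    · exact Eventually.of_forall fun b h' => absurd hS h'
    · filter_upwards [slab_big hh (fun h' => hS ⟨a, h'⟩)] with b hb _ using hb
  obtain ⟨b, hb, hab⟩ := (hB.and (eventually_gt_atTop a)).exists
  exact ⟨a, b, hNa, hab, fun S hS => ⟨(ha S hS).1, hb S hS, (ha S hS).2⟩⟩

/-- The gliding hump: an increasing sequence of unions `S k` of slabs of `h`, each new slab being
adapted to all the functions `Φ (S i)` attached to the earlier unions. -/
lemma hump_seq (hh : Measurable h) {ρ : X → ℝ} (hρ : IsProbDensity μ ρ)
    (Φ : Set X → X → ℝ) (κ : Set X → ℝ) (hκ : ∀ S, 0 < κ S) (N : ℕ) :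
    ∃ (a b : ℕ → ℕ) (S : ℕ → Set X), S 0 = ∅ ∧ (∀ k, S (k + 1) = S k ∪ slab h (a k) (b k)) ∧
      (∀ k, N ≤ a k) ∧ (∀ k, a k < b k) ∧ (∀ k, b k ≤ a (k + 1)) ∧
      ∀ k, ∀ i ≤ k,
      ((∃ n, IntegrableOn (Φ (S i)) (tailSet h n) μ) →
        IntegrableOn (Φ (S i)) (tailSet h (a k)) μ ∧
          ∫ x in tailSet h (a k), ‖Φ (S i) x‖ ∂μ ≤ 1) ∧
      ((¬ ∃ n, IntegrableOn (Φ (S i)) (tailSet h n) μ) →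
        ¬ (IntegrableOn (Φ (S i)) (slab h (a k) (b k)) μ ∧
          ∫ x in slab h (a k) (b k), ‖Φ (S i) x‖ ∂μ ≤ 1)) ∧
      ∫ x in tailSet h (a k), ρ x ∂μ ≤ κ (S i) := by
  classical
  choose A B hNA hAB hP using hump_step hh hρ Φ κ hκ
  -- The state records the current union, the next admissible level, and all unions so far.
  let st : ℕ → Set X × ℕ × Finset (Set X) := fun k => Nat.rec (∅, N, {∅})
    (fun _ s => (s.1 ∪ slab h (A s.2.1 s.2.2) (B s.2.1 s.2.2), B s.2.1 s.2.2,
      insert (s.1 ∪ slab h (A s.2.1 s.2.2) (B s.2.1 s.2.2)) s.2.2)) k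
  have hst : ∀ k, st (k + 1) = ((st k).1 ∪ slab h (A (st k).2.1 (st k).2.2)
      (B (st k).2.1 (st k).2.2), B (st k).2.1 (st k).2.2,
      insert ((st k).1 ∪ slab h (A (st k).2.1 (st k).2.2) (B (st k).2.1 (st k).2.2))
        (st k).2.2) := fun k => rfl
  have hst0 : st 0 = (∅, N, {∅}) := rfl
  have hmem : ∀ k, ∀ i ≤ k, (st i).1 ∈ (st k).2.2 := by
    intro k
    induction k with
    | zero => intro i hi; obtain rfl : i = 0 := by omega
              simp [hst0]
    | succ k ih =>
      intro i hi
      rcases Nat.lt_or_ge i (k + 1) with hlt | hge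
      · rw [hst k]; exact Finset.mem_insert_of_mem (ih i (by omega))
      · obtain rfl : i = k + 1 := by omega
        rw [hst k]; exact Finset.mem_insert_self _ _
  have hN : ∀ k, N ≤ (st k).2.1 := by
    intro k
    induction k with
    | zero => exact le_rfl
    | succ k ih => rw [hst k]; exact (ih.trans (hNA _ _)).trans (hAB _ _).le
  refine ⟨fun k => A (st k).2.1 (st k).2.2, fun k => B (st k).2.1 (st k).2.2,
    fun k => (st k).1, rfl, fun k => rfl, fun k => (hN k).trans (hNA _ _), fun k => hAB _ _,
    fun k => ?_, fun k i hi => hP _ _ _ (hmem k i hi)⟩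
  exact hNA (st (k + 1)).2.1 (st (k + 1)).2.2

end Tails

/-! ### Integrability of the subgradient -/

section Perturbation

variable {X : Type*} [MeasurableSpace X] {μ : Measure X}

/-- The density `ρ` with mass added on `S` (`ε = 1`) or removed from `S` (`ε = -1`), the total mass
being restored by rescaling `ρ` on `B`. -/
noncomputable def pert (μ : Measure X) (ε : ℝ) (ρ : X → ℝ) (B S : Set X) (x : X) : ℝ :=
  ρ x + (ε * S.indicator ρ x - ε * ((∫ y in S, ρ y ∂μ) / ∫ y in B, ρ y ∂μ) * B.indicator ρ x)

lemma pert_empty (ε : ℝ) (ρ : X → ℝ) (B : Set X) : pert μ ε ρ B ∅ = ρ := by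
  funext x; simp [pert]

lemma pert_sub {ε : ℝ} {ρ : X → ℝ} (hρ : Integrable ρ μ) {B S S' : Set X}
    (hS : MeasurableSet S) (hS' : MeasurableSet S') (hSS : S ⊆ S') (x : X) :
    pert μ ε ρ B S' x - pert μ ε ρ B S x = ε * (S' \ S).indicator ρ x
      - ε * ((∫ y in S' \ S, ρ y ∂μ) / ∫ y in B, ρ y ∂μ) * B.indicator ρ x := by
  have h1 : ∫ y in S', ρ y ∂μ = (∫ y in S, ρ y ∂μ) + ∫ y in S' \ S, ρ y ∂μ := by
    rw [← setIntegral_union disjoint_sdiff_self_right (hS'.diff hS) hρ.integrableOn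
      hρ.integrableOn, Set.union_sdiff_cancel hSS]
  have h2 : S'.indicator ρ x = S.indicator ρ x + (S' \ S).indicator ρ x := by
    by_cases hx : x ∈ S
    · simp [hx, hSS hx]
    · by_cases hx' : x ∈ S' <;> simp [hx, hx']
  simp only [pert, h1, h2]
  ring

lemma isProbDensity_pert {ε : ℝ} (hε : ε = 1 ∨ ε = -1) {ρ : X → ℝ} (hρ : IsProbDensity μ ρ)
    {B S : Set X} (hB : MeasurableSet B) (hS : MeasurableSet S) (hBS : Disjoint B S)
    (hw : 1 / 2 ≤ ∫ y in B, ρ y ∂μ) : IsProbDensity μ (pert μ ε ρ B S) := by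
  have hint : Integrable ρ μ := integrable_of_integral_eq_one hρ.2.2
  have hwS : 0 ≤ ∫ y in S, ρ y ∂μ := setIntegral_nonneg hS fun x _ => hρ.2.1 x
  have hsum : (∫ y in B, ρ y ∂μ) + ∫ y in S, ρ y ∂μ ≤ 1 := by
    rw [← setIntegral_union hBS hS hint.integrableOn hint.integrableOn, ← hρ.2.2]
    exact setIntegral_le_integral hint (Eventually.of_forall hρ.2.1)
  have hq0 : 0 ≤ (∫ y in S, ρ y ∂μ) / ∫ y in B, ρ y ∂μ := by positivity
  have hq1 : (∫ y in S, ρ y ∂μ) / ∫ y in B, ρ y ∂μ ≤ 1 := by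
    rw [div_le_one (by linarith)]; linarith
  refine ⟨?_, fun x => ?_, ?_⟩
  · unfold pert
    exact hρ.1.add (((hρ.1.indicator hS).const_mul _).sub ((hρ.1.indicator hB).const_mul _))
  · have hx := hρ.2.1 x
    unfold pert
    by_cases hxB : x ∈ B
    · have hxS : x ∉ S := fun h => Set.disjoint_left.1 hBS hxB h
      simp only [hxB, hxS, Set.indicator_of_mem, Set.indicator_of_notMem, not_false_eq_true]
      rcases hε with rfl | rfl <;> nlinarith
    · by_cases hxS : x ∈ S
      · simp only [hxB, hxS, Set.indicator_of_mem, Set.indicator_of_notMem, not_false_eq_true]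
        rcases hε with rfl | rfl <;> nlinarith
      · simpa [hxB, hxS] using hx
  · unfold pert
    have hsub : Integrable (fun x => ε * S.indicator ρ x
        - ε * ((∫ y in S, ρ y ∂μ) / ∫ y in B, ρ y ∂μ) * B.indicator ρ x) μ :=
      ((hint.indicator hS).const_mul _).sub ((hint.indicator hB).const_mul _)
    rw [integral_add hint hsub,
      integral_sub ((hint.indicator hS).const_mul _) ((hint.indicator hB).const_mul _),
      integral_const_mul, integral_const_mul, integral_indicator hS, integral_indicator hB, hρ.2.2]
    have : (∫ y in B, ρ y ∂μ) ≠ 0 := by linarith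
    field_simp
    ring

/-- A finite functional with a subgradient at every density cannot have, at `ρ`, a subgradient `g`
with `g ρ` of infinite integral on `{ε g ≥ N}`. The gliding hump produces densities
`pert S k` with `F (pert S k) → ∞`, and a limit density `pert (⋃ S k)` at which the subgradient
inequality from every `pert S k` loses at most `2`. -/
lemma no_infinite_tail {F : (X → ℝ) → ℝ} {G : (X → ℝ) → X → ℝ}
    (hconv : ∀ p q, IsProbDensity μ p → IsProbDensity μ q →
      F p + ∫ x, G p x * (q x - p x) ∂μ ≤ F q)
    {ρ : X → ℝ} (hρ : IsProbDensity μ ρ) (hg : Measurable (G ρ))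
    {ε : ℝ} (hε : ε = 1 ∨ ε = -1) {N : ℕ}
    (hw : 1 / 2 ≤ ∫ y in {x | |G ρ x| < N}, ρ y ∂μ)
    (hbad : ¬ IntegrableOn (fun x => G ρ x * ρ x) (tailSet (fun x => ε * G ρ x) N) μ) :
    False := by
  set g := G ρ with hgdef
  set h : X → ℝ := fun x => ε * g x with hhdef
  set B : Set X := {x | |g x| < N} with hBdef
  set w := ∫ y in B, ρ y ∂μ with hwdef
  have hint : Integrable ρ μ := integrable_of_integral_eq_one hρ.2.2
  have hh : Measurable h := hg.const_mul ε
  have hB : MeasurableSet B := measurableSet_lt hg.abs measurable_const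
  have habs : ∀ x, |h x| = |g x| := by
    intro x; rcases hε with rfl | rfl <;> simp [h]
  have hεε : ε * ε = 1 := by rcases hε with rfl | rfl <;> norm_num
  have hBtail : Disjoint B (tailSet h N) := by
    rw [Set.disjoint_left]
    intro x hxB hxt
    have h1 : |g x| < N := hxB
    have h2 : (N : ℝ) ≤ h x := hxt
    have := le_abs_self (h x)
    rw [habs] at this
    linarith
  -- `g ρ` is integrable wherever `g` is bounded
  have hbdd : ∀ (c : ℝ) (U : Set X), MeasurableSet U → (∀ x ∈ U, |g x| ≤ c) →
      IntegrableOn (fun x => g x * ρ x) U μ := by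
    intro c U hU hc
    refine Integrable.bdd_mul (c := c) hint.integrableOn hg.aestronglyMeasurable ?_
    exact (ae_restrict_iff' hU).2 (Eventually.of_forall hc)
  have hslab : ∀ a b, IntegrableOn (fun x => g x * ρ x) (slab h a b) μ := by
    intro a b
    refine hbdd b _ (measurableSet_slab hh a b) fun x hx => ?_
    rw [← habs, abs_of_nonneg ((Nat.cast_nonneg a).trans hx.1)]
    exact hx.2.le
  have hgB : IntegrableOn (fun x => g x * ρ x) B μ := hbdd N B hB fun x hx => le_of_lt hx
  have hnotail : ¬ ∃ n, IntegrableOn (fun x => g x * ρ x) (tailSet h n) μ := by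
    rintro ⟨n, hn⟩
    refine hbad (((hslab N n).union hn).mono_set fun x hx => ?_)
    by_cases hxn : h x < n
    · exact Or.inl ⟨hx, hxn⟩
    · exact Or.inr (not_lt.1 hxn)
  -- `κ S` makes the contribution of `B` to the error at most `1`
  obtain ⟨a, b, S, hS0, hS1, hNa, hab, hba, hP⟩ := hump_seq hh hρ
    (fun S x => G (pert μ ε ρ B S) x * ρ x)
    (fun S => w / (1 + ∫ x in B, ‖G (pert μ ε ρ B S) x * ρ x‖ ∂μ))
    (fun S => div_pos (by linarith) (by positivity)) N
  have hSm : ∀ k, MeasurableSet (S k) := by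
    intro k
    induction k with
    | zero => rw [hS0]; exact MeasurableSet.empty
    | succ k ih => rw [hS1]; exact ih.union (measurableSet_slab hh _ _)
  have hamono : Monotone a := monotone_nat_of_le_succ fun k => (hab k).le.trans (hba k)
  have hSmono : Monotone S := monotone_nat_of_le_succ fun k => by
    rw [hS1]; exact Set.subset_union_left
  have hStail : ∀ k, S k ⊆ tailSet h N := by
    intro k
    induction k with
    | zero => rw [hS0]; exact Set.empty_subset _
    | succ k ih =>
      rw [hS1]
      exact Set.union_subset ih ((slab_subset_tailSet _ _).trans (tailSet_antitone (hNa k)))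
  have hSlt : ∀ k, ∀ x ∈ S k, h x < a k := by
    intro k
    induction k with
    | zero => rw [hS0]; simp
    | succ k ih =>
      rw [hS1]
      have h1 : (a k : ℝ) ≤ a (k + 1) := by exact_mod_cast hamono (Nat.le_succ k)
      have h2 : (b k : ℝ) ≤ a (k + 1) := by exact_mod_cast hba k
      rintro x (hx | hx)
      · exact (ih x hx).trans_le h1
      · exact hx.2.trans_le h2
  set V : Set X := ⋃ k, S k with hV
  have hVm : MeasurableSet V := MeasurableSet.iUnion hSm
  have hVtail : V ⊆ tailSet h N := Set.iUnion_subset hStail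
  have hSV : ∀ k, S k ⊆ V := Set.subset_iUnion S
  have hslabV : ∀ i k, i ≤ k → slab h (a k) (b k) ⊆ V \ S i := by
    intro i k hik x hx
    refine ⟨hSV (k + 1) (by rw [hS1]; exact Or.inr hx), fun hxS => ?_⟩
    have h1 := hSlt k x (hSmono hik hxS)
    exact absurd hx.1 (not_le.2 h1)
  have hVSi : ∀ i, V \ S i ⊆ tailSet h (a i) := by
    rintro i x ⟨hxV, hxS⟩
    have key : ∀ k, S k ⊆ S i ∪ tailSet h (a i) := by
      intro k
      induction k with
      | zero => rw [hS0]; exact Set.empty_subset _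
      | succ k ih =>
        rcases Nat.lt_or_ge k i with hki | hki
        · exact (hSmono hki).trans Set.subset_union_left
        · rw [hS1]
          exact Set.union_subset ih (((slab_subset_tailSet _ _).trans
            (tailSet_antitone (hamono hki))).trans Set.subset_union_right)
    obtain ⟨k, hk⟩ := Set.mem_iUnion.1 hxV
    exact (key k hk).resolve_left hxS
  have hatop : Tendsto a atTop atTop :=
    (strictMono_nat_of_lt_succ fun k => (hab k).trans_le (hba k)).tendsto_atTop
  have hdens : ∀ U, MeasurableSet U → U ⊆ tailSet h N → IsProbDensity μ (pert μ ε ρ B U) :=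
    fun U hU hUt => isProbDensity_pert hε hρ hB hU (hBtail.mono_right hUt) hw
  -- each slab carries at least one unit of `∫ h ρ`
  have hslab1 : ∀ k, 1 < ∫ x in slab h (a k) (b k), h x * ρ x ∂μ := by
    intro k
    have h1 := (hP k 0 (Nat.zero_le k)).2.1
    simp only [hS0, pert_empty] at h1
    have h2 := h1 hnotail
    have h3 : 1 < ∫ x in slab h (a k) (b k), ‖g x * ρ x‖ ∂μ := by
      by_contra hcon
      exact h2 ⟨hslab _ _, not_lt.1 hcon⟩
    refine h3.trans_eq (setIntegral_congr_fun (measurableSet_slab hh _ _) fun x hx => ?_)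
    have hx0 : 0 ≤ h x := (Nat.cast_nonneg _).trans hx.1
    simp only [Real.norm_eq_abs, abs_mul, abs_of_nonneg (hρ.2.1 x), ← habs, abs_of_nonneg hx0]
  have hhint : ∀ U, IntegrableOn (fun x => g x * ρ x) U μ →
      IntegrableOn (fun x => h x * ρ x) U μ := by
    intro U hU
    have := hU.const_mul ε
    refine this.congr (Eventually.of_forall fun x => ?_)
    simp only [h]; ring
  have hSint : ∀ k, IntegrableOn (fun x => g x * ρ x) (S k) μ := by
    intro k
    induction k with
    | zero => rw [hS0]; exact integrableOn_empty
    | succ k ih => rw [hS1]; exact ih.union (hslab _ _)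
  have hgrow : ∀ k : ℕ, (k : ℝ) ≤ ∫ x in S k, h x * ρ x ∂μ := by
    intro k
    induction k with
    | zero => simp [hS0]
    | succ k ih =>
      have hd : Disjoint (S k) (slab h (a k) (b k)) :=
        disjoint_sdiff_self_right.mono_right (hslabV k k le_rfl)
      rw [hS1, setIntegral_union hd (measurableSet_slab hh _ _) (hhint _ (hSint k))
        (hhint _ (hslab _ _))]
      push_cast
      linarith [hslab1 k]
  have hwle : ∀ U, MeasurableSet U →
      0 ≤ ∫ y in U, ρ y ∂μ ∧ ∫ y in U, ρ y ∂μ ≤ 1 := by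
    intro U hU
    refine ⟨setIntegral_nonneg hU fun x _ => hρ.2.1 x, ?_⟩
    rw [← hρ.2.2]
    exact setIntegral_le_integral hint (Eventually.of_forall hρ.2.1)
  -- growth of `F` along the humps
  have hFgrow : ∀ k : ℕ, F ρ + k - 2 * |∫ x in B, h x * ρ x ∂μ| ≤ F (pert μ ε ρ B (S k)) := by
    intro k
    have h1 := hconv ρ _ hρ (hdens (S k) (hSm k) (hStail k))
    have h2 : ∫ x, G ρ x * (pert μ ε ρ B (S k) x - ρ x) ∂μ
        = (∫ x in S k, h x * ρ x ∂μ)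
          - ((∫ y in S k, ρ y ∂μ) / w) * ∫ x in B, h x * ρ x ∂μ := by
      rw [← integral_indicator (hSm k), ← integral_indicator hB, ← integral_const_mul,
        ← integral_sub ((integrable_indicator_iff (hSm k)).2 (hhint _ (hSint k)))
          (((integrable_indicator_iff hB).2 (hhint _ hgB)).const_mul _)]
      refine integral_congr_ae (Eventually.of_forall fun x => ?_)
      by_cases hx1 : x ∈ S k <;> by_cases hx2 : x ∈ B <;>
        simp [pert, hx1, hx2, h, ← hgdef, ← hwdef] <;> ring
    rw [h2] at h1
    have h3 := hgrow k
    obtain ⟨h4, h5⟩ := hwle (S k) (hSm k)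
    have h6 : ((∫ y in S k, ρ y ∂μ) / w) * ∫ x in B, h x * ρ x ∂μ
        ≤ 2 * |∫ x in B, h x * ρ x ∂μ| := by
      have h7 : (∫ y in S k, ρ y ∂μ) / w ≤ 2 := by
        rw [div_le_iff₀ (by linarith)]; linarith
      have h8 : 0 ≤ (∫ y in S k, ρ y ∂μ) / w := div_nonneg h4 (by linarith)
      calc _ ≤ ((∫ y in S k, ρ y ∂μ) / w) * |∫ x in B, h x * ρ x ∂μ| :=
            mul_le_mul_of_nonneg_left (le_abs_self _) h8
        _ ≤ _ := mul_le_mul_of_nonneg_right h7 (abs_nonneg _)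
    linarith
  -- the subgradient inequality from the `i`-th hump to the limit density
  have hlim : ∀ i, F (pert μ ε ρ B (S i)) - 2 ≤ F (pert μ ε ρ B V) := by
    intro i
    have h1 := hconv _ _ (hdens (S i) (hSm i) (hStail i)) (hdens V hVm hVtail)
    set p := pert μ ε ρ B (S i) with hp
    set W := V \ S i with hWdef
    have hWm : MeasurableSet W := hVm.diff (hSm i)
    suffices hs : -2 ≤ ∫ x, G p x * (pert μ ε ρ B V x - p x) ∂μ by linarith
    by_cases hI : Integrable (fun x => G p x * (pert μ ε ρ B V x - p x)) μ
    swap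
    · rw [integral_undef hI]; norm_num
    have hpt : ∀ x, G p x * (pert μ ε ρ B V x - p x)
        = ε * W.indicator (fun x => G p x * ρ x) x
          - ε * ((∫ y in W, ρ y ∂μ) / w) * B.indicator (fun x => G p x * ρ x) x := by
      intro x
      rw [hp, pert_sub hint (hSm i) hVm (hSV i)]
      by_cases hx1 : x ∈ W <;> by_cases hx2 : x ∈ B <;>
        simp [hx1, hx2, ← hWdef, ← hwdef, ← hp] <;> ring
    have hdisj : Disjoint B W := hBtail.mono_right (Set.sdiff_subset.trans hVtail)
    have hWi : IntegrableOn (fun x => G p x * ρ x) W μ := by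
      refine IntegrableOn.congr_fun ((hI.integrableOn (s := W)).const_mul ε) (fun x hx => ?_) hWm
      have hxB : x ∉ B := fun h' => Set.disjoint_left.1 hdisj h' hx
      simp only [hpt, hx, hxB, Set.indicator_of_mem, Set.indicator_of_notMem, not_false_eq_true]
      linear_combination (G p x * ρ x) * hεε
    have hWpos : 0 < ∫ y in W, ρ y ∂μ := by
      have h2 : ∫ y in slab h (a i) (b i), ρ y ∂μ ≤ ∫ y in W, ρ y ∂μ :=
        setIntegral_mono_set hint.integrableOn (Eventually.of_forall hρ.2.1)
          (hslabV i i le_rfl).eventuallyLE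
      refine lt_of_lt_of_le ?_ h2
      have h3 : ∫ x in slab h (a i) (b i), h x * ρ x ∂μ
          ≤ ∫ x in slab h (a i) (b i), b i * ρ x ∂μ := by
        refine setIntegral_mono_on (hhint _ (hslab _ _)) (hint.integrableOn.const_mul _)
          (measurableSet_slab hh _ _) fun x hx => ?_
        exact mul_le_mul_of_nonneg_right hx.2.le (hρ.2.1 x)
      rw [integral_const_mul] at h3
      have h4 := hslab1 i
      by_contra hcon
      have h5 : (b i : ℝ) * ∫ y in slab h (a i) (b i), ρ y ∂μ ≤ 0 :=
        mul_nonpos_of_nonneg_of_nonpos (Nat.cast_nonneg _) (not_lt.1 hcon)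
      linarith
    have hBi : IntegrableOn (fun x => G p x * ρ x) B μ := by
      refine IntegrableOn.congr_fun ((hI.integrableOn (s := B)).const_mul
        (-ε * (w / ∫ y in W, ρ y ∂μ))) (fun x hx => ?_) hB
      have hxW : x ∉ W := fun h' => Set.disjoint_left.1 hdisj hx h'
      simp only [hpt, hx, hxW, Set.indicator_of_mem, Set.indicator_of_notMem, not_false_eq_true]
      have hw0 : w ≠ 0 := by linarith
      have hW0 := hWpos.ne'
      field_simp
      linear_combination ((∫ y in W, ρ y ∂μ) * (G p x * ρ x)) * hεε
    -- integrability on `W`, which contains all later slabs, excludes the divergent alternative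
    have hgood : ∃ n, IntegrableOn (fun x => G p x * ρ x) (tailSet h n) μ := by
      by_contra hno
      have h2 := tail_small (a₀ := 0) hh hWm (hWi.mono_set Set.inter_subset_left) one_pos
      obtain ⟨k, hk, hik⟩ := ((hatop.eventually h2).and (eventually_ge_atTop i)).exists
      refine (hP k i hik).2.1 hno ?_
      have hsub : slab h (a k) (b k) ⊆ W ∩ tailSet h (a k) :=
        Set.subset_inter (hslabV i k hik) (slab_subset_tailSet _ _)
      exact ⟨hk.1.mono_set hsub, (setIntegral_mono_set hk.1.norm
        (Eventually.of_forall fun x => norm_nonneg _) hsub.eventuallyLE).trans hk.2⟩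
    obtain ⟨ht1, ht2⟩ := (hP i i le_rfl).1 hgood
    have ht3 := (hP i i le_rfl).2.2
    rw [← hp] at ht1 ht2 ht3
    have hWw : ∫ y in W, ρ y ∂μ ≤ ∫ y in tailSet h (a i), ρ y ∂μ :=
      setIntegral_mono_set hint.integrableOn (Eventually.of_forall hρ.2.1) (hVSi i).eventuallyLE
    have e1 : |∫ x in W, G p x * ρ x ∂μ| ≤ 1 := by
      rw [← Real.norm_eq_abs]
      refine (norm_integral_le_integral_norm _).trans (le_trans ?_ ht2)
      exact setIntegral_mono_set ht1.norm (Eventually.of_forall fun x => norm_nonneg _)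
        (hVSi i).eventuallyLE
    have e2 : |((∫ y in W, ρ y ∂μ) / w) * ∫ x in B, G p x * ρ x ∂μ| ≤ 1 := by
      have hn := norm_integral_le_integral_norm (μ := μ.restrict B) (fun x => G p x * ρ x)
      have hw0 : 0 < w := by linarith
      set I := ∫ x in B, ‖G p x * ρ x‖ ∂μ with hIdef
      have hI0 : 0 ≤ I := (norm_nonneg _).trans hn
      rw [abs_mul, abs_of_pos (div_pos hWpos hw0)]
      have h2 : (∫ y in W, ρ y ∂μ) / w ≤ 1 / (1 + I) := by
        rw [div_le_iff₀ hw0]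
        calc _ ≤ w / (1 + I) := hWw.trans ht3
          _ = _ := by ring
      calc _ ≤ 1 / (1 + I) * I := mul_le_mul h2 hn (abs_nonneg _) (by positivity)
        _ ≤ 1 := by
          rw [div_mul_eq_mul_div, div_le_one (by positivity)]; linarith
    have hval : ∫ x, G p x * (pert μ ε ρ B V x - p x) ∂μ
        = ε * (∫ x in W, G p x * ρ x ∂μ)
          - ε * (((∫ y in W, ρ y ∂μ) / w) * ∫ x in B, G p x * ρ x ∂μ) := by
      simp only [hpt]
      rw [integral_sub (((integrable_indicator_iff hWm).2 hWi).const_mul _)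
        (((integrable_indicator_iff hB).2 hBi).const_mul _), integral_const_mul,
        integral_const_mul, integral_indicator hWm, integral_indicator hB]
      ring
    rw [hval]
    have e1' := abs_le.1 e1
    have e2' := abs_le.1 e2
    rcases hε with rfl | rfl <;> linarith [e1'.1, e1'.2, e2'.1, e2'.2]
  obtain ⟨k, hk⟩ := exists_nat_gt
    (F (pert μ ε ρ B V) + 2 - F ρ + 2 * |∫ x in B, h x * ρ x ∂μ|)
  linarith [hFgrow k, hlim k]

/-- If a functional is finite at every density and has a subgradient at every density, then its
subgradient at `ρ` is integrable against `ρ`. -/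
lemma integrable_subgradient_mul {F : (X → ℝ) → ℝ} {G : (X → ℝ) → X → ℝ}
    (hconv : ∀ p q, IsProbDensity μ p → IsProbDensity μ q →
      F p + ∫ x, G p x * (q x - p x) ∂μ ≤ F q)
    {ρ : X → ℝ} (hρ : IsProbDensity μ ρ) (hg : Measurable (G ρ)) :
    Integrable (fun x => G ρ x * ρ x) μ := by
  have hint : Integrable ρ μ := integrable_of_integral_eq_one hρ.2.2
  have hB : ∀ n : ℕ, MeasurableSet {x | |G ρ x| < n} := fun n =>
    measurableSet_lt hg.abs measurable_const
  obtain ⟨N, hN⟩ : ∃ N : ℕ, 1 / 2 ≤ ∫ y in {x | |G ρ x| < N}, ρ y ∂μ := by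
    have h1 := tendsto_setIntegral_of_monotone (f := ρ) (μ := μ)
      (s := fun n : ℕ => {x | |G ρ x| < n}) hB
      (fun m n hmn x (hx : |G ρ x| < m) => hx.trans_le (by exact_mod_cast hmn))
      hint.integrableOn
    have h2 : ⋃ n : ℕ, {x | |G ρ x| < n} = Set.univ := by
      ext x
      simpa using exists_nat_gt |G ρ x|
    rw [h2, setIntegral_univ, hρ.2.2] at h1
    exact (h1.eventually (le_mem_nhds (by norm_num))).exists
  have hp : IntegrableOn (fun x => G ρ x * ρ x) (tailSet (fun x => 1 * G ρ x) N) μ := by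
    by_contra hcon
    exact no_infinite_tail hconv hρ hg (Or.inl rfl) hN hcon
  have hn : IntegrableOn (fun x => G ρ x * ρ x) (tailSet (fun x => -1 * G ρ x) N) μ := by
    by_contra hcon
    exact no_infinite_tail hconv hρ hg (Or.inr rfl) hN hcon
  have hm : IntegrableOn (fun x => G ρ x * ρ x) {x | |G ρ x| < N} μ :=
    Integrable.bdd_mul (c := N) hint.integrableOn hg.aestronglyMeasurable
      ((ae_restrict_iff' (hB N)).2 (Eventually.of_forall fun x hx => le_of_lt hx))
  rw [← integrableOn_univ]
  refine ((hm.union hp).union hn).mono_set fun x _ => ?_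
  by_cases hx : |G ρ x| < N
  · exact Or.inl (Or.inl hx)
  · rcases le_abs.1 (not_lt.1 hx) with h | h
    · exact Or.inl (Or.inr (by simpa [tailSet] using h))
    · exact Or.inr (by simpa [tailSet] using h)

end Perturbation

/-! ### Velocity and Gibbs' inequality -/

section Flow

variable {X : Type*} [MeasurableSpace X] {μ : Measure X}

/-- The velocity of a differentiable curve of measurable functions is measurable, being a pointwise
limit of difference quotients. -/
lemma measurable_of_hasDerivWithinAt {T t : ℝ} (hT : 0 < T) (ht : t ∈ Set.Icc (0 : ℝ) T)
    {u : ℝ → X → ℝ} {v : X → ℝ} (hu : ∀ s ∈ Set.Icc (0 : ℝ) T, Measurable (u s))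
    (hd : ∀ x, HasDerivWithinAt (fun s => u s x) (v x) (Set.Icc (0 : ℝ) T) t) :
    Measurable v := by
  classical
  have hne : (𝓝[Set.Icc (0 : ℝ) T \ {t}] t).NeBot :=
    accPt_principal_iff_nhdsWithin.1 ((uniqueDiffOn_Icc hT) t ht).accPt
  -- outside `[0, T]` nothing is known about `u`, so the quotients are cut off there
  refine measurable_of_tendsto_metrizable' (𝓝[Set.Icc (0 : ℝ) T \ {t}] t)
    (f := fun s x => if s ∈ Set.Icc (0 : ℝ) T then slope (fun s => u s x) t s else 0) ?_ ?_
  · intro s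
    by_cases hs : s ∈ Set.Icc (0 : ℝ) T
    · simp only [hs, if_true, slope_def_field]
      exact ((hu s hs).sub (hu t ht)).div_const _
    · simp only [hs, if_false]; exact measurable_const
  · rw [tendsto_pi_nhds]
    intro x
    refine (hasDerivWithinAt_iff_tendsto_slope.1 (hd x)).congr' ?_
    filter_upwards [self_mem_nhdsWithin] with s hs
    simp only [hs.1, if_true]

/-- Gibbs' inequality; when the integrand is not integrable the integral is `0` by convention. -/
lemma integral_kl_nonneg {p q : X → ℝ} (hp : IsProbDensity μ p) (hq : IsProbDensity μ q)
    (hqpos : ∀ x, 0 < q x) : 0 ≤ ∫ x, p x * Real.log (p x / q x) ∂μ := by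
  by_cases hI : Integrable (fun x => p x * Real.log (p x / q x)) μ
  swap
  · rw [integral_undef hI]
  have ip := integrable_of_integral_eq_one hp.2.2
  have iq := integrable_of_integral_eq_one hq.2.2
  have h0 : ∫ x, (p x - q x) ∂μ = 0 := by
    rw [integral_sub ip iq, hp.2.2, hq.2.2, sub_self]
  rw [← h0]
  refine integral_mono (ip.sub iq) hI fun x => ?_
  rcases (hp.2.1 x).eq_or_lt with h | h
  · simp only [← h]; simpa using (hqpos x).le
  · have h1 := Real.one_sub_inv_le_log_of_pos (div_pos h (hqpos x))
    have h2 := mul_le_mul_of_nonneg_left h1 h.le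
    have h3 : p x * (1 - (p x / q x)⁻¹) = p x - q x := by
      field_simp
    simp only
    linarith

end Flow

end Auxiliary

/-- Convergence of the (continuous-time) KL divergence gradient flow for minimizing a
jointly linearly convex functional `F` with first variation `G`: along a flow
`(d/dt) log ρ_j(t) = −G_j(ρ(t)) + ∫ G_j(ρ(t)) ρ_j(t) dμ` on `[0, T]`, assuming the KL
divergence to a global minimizer `ρ*` can be differentiated under the integral sign,
`inf_{0 ≤ t ≤ T} F(ρ(t)) − F* ≤ KL(ρ* ‖ ρ(0)) / T`. -/
theorem kl_gradient_flow_convergence {X : Type*} [MeasurableSpace X] (μ : Measure X)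
    (m : ℕ) (hm : 0 < m) (T : ℝ) (hT : 0 < T)
    (F : (Fin m → X → ℝ) → ℝ) (G : (Fin m → X → ℝ) → Fin m → X → ℝ)
    (hconvex : ∀ ρ ρ' : Fin m → X → ℝ, (∀ j, IsProbDensity μ (ρ j)) →
      (∀ j, IsProbDensity μ (ρ' j)) →
      F ρ + ∑ j, ∫ x, G ρ j x * (ρ' j x - ρ j x) ∂μ ≤ F ρ')
    (ρstar : Fin m → X → ℝ) (hρstar : ∀ j, IsProbDensity μ (ρstar j))
    (hmin : ∀ ρ' : Fin m → X → ℝ, (∀ j, IsProbDensity μ (ρ' j)) → F ρstar ≤ F ρ')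
    (ρ : ℝ → Fin m → X → ℝ)
    (hρ_dens : ∀ t ∈ Set.Icc (0 : ℝ) T, ∀ j, IsProbDensity μ (ρ t j))
    (hρ_pos : ∀ t ∈ Set.Icc (0 : ℝ) T, ∀ j x, 0 < ρ t j x)
    (hflow : ∀ t ∈ Set.Icc (0 : ℝ) T, ∀ j x,
      HasDerivWithinAt (fun s => Real.log (ρ s j x))
        (-(G (ρ t) j x) + ∫ y, G (ρ t) j y * ρ t j y ∂μ) (Set.Icc (0 : ℝ) T) t)
    (hKL0_fin : ∀ j, Integrable (fun x => ρstar j x * Real.log (ρstar j x / ρ 0 j x)) μ)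
    (hKL_deriv : ∀ t ∈ Set.Icc (0 : ℝ) T,
      HasDerivWithinAt
        (fun s => ∑ j, ∫ x, ρstar j x * Real.log (ρstar j x / ρ s j x) ∂μ)
        (-(∑ j, ∫ x, (-(G (ρ t) j x) + ∫ y, G (ρ t) j y * ρ t j y ∂μ) * ρstar j x ∂μ))
        (Set.Icc (0 : ℝ) T) t) :
    sInf ((fun t => F (ρ t)) '' Set.Icc (0 : ℝ) T) - F ρstar ≤
      (∑ j, ∫ x, ρstar j x * Real.log (ρstar j x / ρ 0 j x) ∂μ) / T := by
  -- finiteness of `F` makes `G_j(ρ(t)) ρ_j(t)` integrable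
  have hGint : ∀ t ∈ Set.Icc (0 : ℝ) T, ∀ j, Integrable (fun x => G (ρ t) j x * ρ t j x) μ := by
    intro t ht j
    have hmeas : Measurable (G (ρ t) j) := by
      have h1 := measurable_of_hasDerivWithinAt hT ht
        (fun s hs => (hρ_dens s hs j).1.log) (fun x => hflow t ht j x)
      have h2 := (h1.sub_const (∫ y, G (ρ t) j y * ρ t j y ∂μ)).neg
      convert h2 using 1
      funext x
      simp
    have hup : Function.update (ρ t) j (ρ t j) = ρ t := Function.update_eq_self j (ρ t)
    have key := integrable_subgradient_mul (μ := μ)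
      (F := fun p => F (Function.update (ρ t) j p))
      (G := fun p => G (Function.update (ρ t) j p) j) ?_ (hρ_dens t ht j) (by
        simp only [hup]; exact hmeas)
    · simpa only [hup] using key
    · intro p q hp hq
      have hd : ∀ r, IsProbDensity μ r →
          ∀ l, IsProbDensity μ (Function.update (ρ t) j r l) := by
        intro r hr l
        by_cases hl : l = j
        · subst hl; simpa using hr
        · simpa [hl] using hρ_dens t ht l
      have h1 := hconvex _ _ (hd p hp) (hd q hq)
      rw [Finset.sum_eq_single j] at h1
      · simpa using h1
      · intro l _ hl
        simp [hl]
      · simp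
  -- the derivative of the KL divergence is at most `F* - F(ρ(t))`
  have hbound : ∀ t ∈ Set.Icc (0 : ℝ) T,
      -(∑ j, ∫ x, (-(G (ρ t) j x) + ∫ y, G (ρ t) j y * ρ t j y ∂μ) * ρstar j x ∂μ)
        ≤ F ρstar - F (ρ t) := by
    intro t ht
    have h1 := hconvex (ρ t) ρstar (hρ_dens t ht) hρstar
    have h2 : -(∑ j, ∫ x, (-(G (ρ t) j x) + ∫ y, G (ρ t) j y * ρ t j y ∂μ) * ρstar j x ∂μ)
        = ∑ j, ∫ x, G (ρ t) j x * (ρstar j x - ρ t j x) ∂μ := by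
      rw [← Finset.sum_neg_distrib]
      refine Finset.sum_congr rfl fun j _ => ?_
      set c := ∫ y, G (ρ t) j y * ρ t j y ∂μ with hc
      have istar := integrable_of_integral_eq_one (hρstar j).2.2
      have iG := hGint t ht j
      have e1 : (fun x => (-(G (ρ t) j x) + c) * ρstar j x)
          = fun x => c * ρstar j x - G (ρ t) j x * ρstar j x := by funext x; ring
      have e2 : (fun x => G (ρ t) j x * (ρstar j x - ρ t j x))
          = fun x => G (ρ t) j x * ρstar j x - G (ρ t) j x * ρ t j x := by funext x; ring
      rw [e1, e2]
      by_cases hI : Integrable (fun x => G (ρ t) j x * ρstar j x) μ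
      · rw [integral_sub (istar.const_mul c) hI, integral_sub hI iG, integral_const_mul,
          (hρstar j).2.2, ← hc]
        ring
      -- otherwise neither integrand is integrable and both integrals are `0`
      · have n1 : ¬ Integrable (fun x => c * ρstar j x - G (ρ t) j x * ρstar j x) μ := by
          intro h
          refine hI (((istar.const_mul c).sub h).congr (Filter.Eventually.of_forall fun x => ?_))
          simp
        have n2 : ¬ Integrable (fun x => G (ρ t) j x * ρstar j x - G (ρ t) j x * ρ t j x) μ := by
          intro h
          refine hI ((h.add iG).congr (Filter.Eventually.of_forall fun x => ?_))
          simp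
        rw [integral_undef n1, integral_undef n2, neg_zero]
    rw [h2]; linarith
  obtain ⟨c, hc, hceq⟩ := exists_hasDerivAt_eq_slope
    (fun s => ∑ j, ∫ x, ρstar j x * Real.log (ρstar j x / ρ s j x) ∂μ)
    (fun t => -(∑ j, ∫ x, (-(G (ρ t) j x) + ∫ y, G (ρ t) j y * ρ t j y ∂μ) * ρstar j x ∂μ))
    hT (fun t ht => (hKL_deriv t ht).continuousWithinAt)
    (fun t ht => (hKL_deriv t (Set.Ioo_subset_Icc_self ht)).hasDerivAt (Icc_mem_nhds ht.1 ht.2))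
  have hcI := Set.Ioo_subset_Icc_self hc
  have hKLT : 0 ≤ ∑ j, ∫ x, ρstar j x * Real.log (ρstar j x / ρ T j x) ∂μ :=
    Finset.sum_nonneg fun j _ => integral_kl_nonneg (hρstar j)
      (hρ_dens T ⟨hT.le, le_rfl⟩ j) (hρ_pos T ⟨hT.le, le_rfl⟩ j)
  have hinf : sInf ((fun t => F (ρ t)) '' Set.Icc (0 : ℝ) T) ≤ F (ρ c) := by
    refine csInf_le ⟨F ρstar, ?_⟩ ⟨c, hcI, rfl⟩
    rintro _ ⟨t, ht, rfl⟩
    exact hmin _ (hρ_dens t ht)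
  have hb := hbound c hcI
  rw [hceq, sub_zero, sub_div] at hb
  have := div_nonneg hKLT hT.le
  linarith
end

section
/- For every positive integer d and every σ > 0 there exists a constant C > 0 (depending only on d and σ) such that for every integer M ≥ 2: ∑_{k ∈ ℤ^d} e^{−2π²‖k‖₁²/(dσ²)} · (4π²‖k‖₁/σ² + 2π²d/σ²)^{M+1} ≤ (C · M · log M)^{(M+1)/2}, where ‖k‖₁ = |k_1| + ⋯ + |k_d| and the sum on the left converges. -/
/-!
Write `s = ‖k‖₁`, `n = M + 1` and `a = 2π² / (dσ²)`. The polynomial factor is at most `D (1 + s)`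
for a constant `D`, and the elementary inequality `t ≤ exp (t² / 2)`, scaled by `√n`, gives
`(1 + s) ^ n ≤ √(2n/a) ^ n * exp (a/2) * exp (a s² / 2)` (`one_add_pow_le`). Half of the Gaussian
absorbs the last factor, and the other half is summable over the lattice, with a sum `S` that does
not depend on `M` (`summable_exp_neg_sq`). Hence the whole sum is at most
`(D √(2n/a)) ^ n * exp (a/2) * S`. Since `n ≤ 2M` and `log M ≥ log 2 > 0`, this is at most
`√(C M log M) ^ n` for a suitable `C`.
-/

open Real

/-- Coordinatewise products of a summable nonnegative function on `ℤ` are summable on `ℤ^d`. -/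
lemma summable_prod_coord (g : ℤ → ℝ) (h0 : ∀ n, 0 ≤ g n) (hg : Summable g) (d : ℕ) :
    Summable (fun k : Fin d → ℤ => ∏ i, g (k i)) := by
  induction d with
  | zero => exact Summable.of_finite
  | succ d ih =>
    rw [← (Fin.consEquiv (fun _ : Fin (d + 1) => ℤ)).summable_iff]
    have := hg.mul_of_nonneg ih h0 (fun k => Finset.prod_nonneg fun i _ => h0 _)
    refine this.congr fun x => ?_
    simp [Fin.prod_univ_succ, Fin.consEquiv]

lemma summable_exp_neg_abs (b : ℝ) (hb : 0 < b) :
    Summable (fun n : ℤ => Real.exp (-(b * |(n : ℝ)|))) := by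
  have h : Summable (fun n : ℕ => Real.exp (-(b * (n : ℝ)))) := by
    have := Real.summable_exp_nat_mul_iff.mpr (neg_lt_zero.mpr hb)
    refine this.congr fun n => ?_
    congr 1; ring
  refine Summable.of_nat_of_neg ?_ ?_ <;> simpa using h

/-- On the integer lattice `‖k‖₁ ≤ ‖k‖₁²`, so the Gaussian is dominated by a product of
geometric sequences. -/
lemma summable_exp_neg_sq (d : ℕ) (b : ℝ) (hb : 0 < b) :
    Summable (fun k : Fin d → ℤ => Real.exp (-(b * (∑ i, |(k i : ℝ)|) ^ 2))) := by
  refine Summable.of_nonneg_of_le (fun _ => (Real.exp_pos _).le) (fun k => ?_)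
    (summable_prod_coord _ (fun _ => (Real.exp_pos _).le) (summable_exp_neg_abs b hb) d)
  rw [← Real.exp_sum, Real.exp_le_exp, Finset.sum_neg_distrib, ← Finset.mul_sum, neg_le_neg_iff]
  refine mul_le_mul_of_nonneg_left ?_ hb.le
  have hz : (∑ i, |k i|) ≤ (∑ i, |k i|) ^ 2 := Int.le_self_sq _
  exact_mod_cast hz

/-- The choice of scale `√(2n/a)` in `t ≤ exp (t² / 2)` makes the `n`-th power cost only
`exp (a (1 + s)² / 4) ≤ exp (a/2) * exp (a s² / 2)`. -/
lemma one_add_pow_le (a : ℝ) (ha : 0 < a) (n : ℕ) (hn : 0 < n) (s : ℝ) (hs : 0 ≤ s) :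
    (1 + s) ^ n ≤ √(2 * n / a) ^ n * (Real.exp (a / 2) * Real.exp (a / 2 * s ^ 2)) := by
  have hn' : (0 : ℝ) < n := by exact_mod_cast hn
  set r := √(2 * n / a) with hr
  have hr0 : 0 < r := Real.sqrt_pos.mpr (by positivity)
  have hr2 : r ^ 2 = 2 * n / a := Real.sq_sqrt (by positivity)
  have h1 : (1 + s) / r ≤ Real.exp (((1 + s) / r) ^ 2 / 2) := by
    have := Real.add_one_le_exp (((1 + s) / r) ^ 2 / 2)
    nlinarith [sq_nonneg ((1 + s) / r - 1)]
  have h2 : 1 + s ≤ r * Real.exp (((1 + s) / r) ^ 2 / 2) := by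
    rw [div_le_iff₀ hr0] at h1; linarith
  calc (1 + s) ^ n ≤ (r * Real.exp (((1 + s) / r) ^ 2 / 2)) ^ n :=
        pow_le_pow_left₀ (by positivity) h2 n
    _ = r ^ n * Real.exp (a * (1 + s) ^ 2 / 4) := by
        rw [mul_pow, ← Real.exp_nat_mul, div_pow, hr2]
        congr 2; field_simp; norm_num
    _ ≤ _ := by
        rw [← Real.exp_add]
        gcongr
        nlinarith [mul_nonneg ha.le (sq_nonneg (1 - s))]


/-- For every dimension `d ≥ 1` and `σ > 0` there is `C > 0` such that for all `M ≥ 2`,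
`∑_{k ∈ ℤ^d} e^{−2π²‖k‖₁²/(dσ²)} (4π²‖k‖₁/σ² + 2π²d/σ²)^{M+1} ≤ (C M log M)^{(M+1)/2}`,
the sum on the left being convergent. -/
theorem lattice_gaussian_sum_bound (d : ℕ) (hd : 0 < d) (σ : ℝ) (hσ : 0 < σ) :
    ∃ C : ℝ, 0 < C ∧ ∀ M : ℕ, 2 ≤ M →
      Summable (fun k : Fin d → ℤ =>
        Real.exp (-(2 * π ^ 2 * (∑ i, |(k i : ℝ)|) ^ 2) / ((d : ℝ) * σ ^ 2)) *
          (4 * π ^ 2 * (∑ i, |(k i : ℝ)|) / σ ^ 2 + 2 * π ^ 2 * (d : ℝ) / σ ^ 2) ^ (M + 1)) ∧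
      (∑' k : Fin d → ℤ,
          Real.exp (-(2 * π ^ 2 * (∑ i, |(k i : ℝ)|) ^ 2) / ((d : ℝ) * σ ^ 2)) *
            (4 * π ^ 2 * (∑ i, |(k i : ℝ)|) / σ ^ 2 + 2 * π ^ 2 * (d : ℝ) / σ ^ 2) ^ (M + 1)) ≤
        (C * (M : ℝ) * Real.log M) ^ (((M : ℝ) + 1) / 2) := by
  have hd' : (0 : ℝ) < d := by exact_mod_cast hd
  set a : ℝ := 2 * π ^ 2 / (d * σ ^ 2) with ha_def
  set D : ℝ := 4 * π ^ 2 / σ ^ 2 + 2 * π ^ 2 * d / σ ^ 2 with hD_def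
  have ha : 0 < a := by positivity
  have hD : 0 < D := by positivity
  have hS := summable_exp_neg_sq d (a / 2) (by positivity)
  set S : ℝ := ∑' k : Fin d → ℤ, Real.exp (-(a / 2 * (∑ i, |(k i : ℝ)|) ^ 2)) with hS_def
  -- The maximum with `1` lets the constant `exp (a/2) * S` be absorbed as `E ≤ E ^ (M + 1)`.
  set E : ℝ := max 1 (Real.exp (a / 2) * S) with hE_def
  have hE1 : 1 ≤ E := le_max_left _ _
  have hl2 : 0 < Real.log 2 := Real.log_pos (by norm_num)
  refine ⟨D ^ 2 * E ^ 2 * (4 / (a * Real.log 2)), by positivity, fun M hM => ?_⟩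
  have hM' : (2 : ℝ) ≤ M := by exact_mod_cast hM
  set R : ℝ := √(2 * (M + 1 : ℕ) / a) with hR_def
  have hterm : ∀ k : Fin d → ℤ,
      Real.exp (-(2 * π ^ 2 * (∑ i, |(k i : ℝ)|) ^ 2) / ((d : ℝ) * σ ^ 2)) *
          (4 * π ^ 2 * (∑ i, |(k i : ℝ)|) / σ ^ 2 + 2 * π ^ 2 * (d : ℝ) / σ ^ 2) ^ (M + 1) ≤
        (D * R) ^ (M + 1) * Real.exp (a / 2) *
          Real.exp (-(a / 2 * (∑ i, |(k i : ℝ)|) ^ 2)) := by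
    intro k
    have hs : 0 ≤ ∑ i, |(k i : ℝ)| := Finset.sum_nonneg fun i _ => abs_nonneg _
    generalize ∑ i, |(k i : ℝ)| = s at hs ⊢
    have e1 : -(2 * π ^ 2 * s ^ 2) / ((d : ℝ) * σ ^ 2) = -(a / 2 * s ^ 2) + -(a / 2 * s ^ 2) := by
      rw [ha_def]; ring
    have e2 : 4 * π ^ 2 * s / σ ^ 2 + 2 * π ^ 2 * (d : ℝ) / σ ^ 2 ≤ D * (1 + s) := by
      have p1 : 0 ≤ 4 * π ^ 2 / σ ^ 2 := by positivity
      have p2 : 0 ≤ 2 * π ^ 2 * d / σ ^ 2 * s := by positivity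
      have : D * (1 + s) = (4 * π ^ 2 * s / σ ^ 2 + 2 * π ^ 2 * (d : ℝ) / σ ^ 2) +
          (4 * π ^ 2 / σ ^ 2 + 2 * π ^ 2 * d / σ ^ 2 * s) := by rw [hD_def]; ring
      linarith
    have e3 := one_add_pow_le a ha (M + 1) (by omega) s hs
    rw [e1, Real.exp_add]
    have e4 : Real.exp (-(a / 2 * s ^ 2)) * Real.exp (a / 2 * s ^ 2) = 1 := by
      rw [← Real.exp_add]; simp
    calc _ ≤ Real.exp (-(a / 2 * s ^ 2)) * Real.exp (-(a / 2 * s ^ 2)) *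
          (D * (1 + s)) ^ (M + 1) := by gcongr
      _ ≤ Real.exp (-(a / 2 * s ^ 2)) * Real.exp (-(a / 2 * s ^ 2)) *
          (D ^ (M + 1) * (R ^ (M + 1) * (Real.exp (a / 2) * Real.exp (a / 2 * s ^ 2)))) := by
          rw [mul_pow]; gcongr
      _ = (D * R) ^ (M + 1) * Real.exp (a / 2) * Real.exp (-(a / 2 * s ^ 2)) *
          (Real.exp (-(a / 2 * s ^ 2)) * Real.exp (a / 2 * s ^ 2)) := by rw [mul_pow]; ring
      _ = _ := by rw [e4, mul_one]
  have hdom := hS.mul_left ((D * R) ^ (M + 1) * Real.exp (a / 2))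
  have hsum := Summable.of_nonneg_of_le (fun k => by positivity) hterm hdom
  refine ⟨hsum, (hsum.tsum_le_tsum hterm hdom).trans ?_⟩
  rw [tsum_mul_left, ← hS_def]
  have hlog : Real.log 2 ≤ Real.log M := Real.log_le_log (by norm_num) hM'
  set X : ℝ := D ^ 2 * E ^ 2 * (4 / (a * Real.log 2)) * M * Real.log M with hX_def
  have hX : 0 ≤ X := by
    have := hl2.le.trans hlog
    positivity
  have hrpow : X ^ (((M : ℝ) + 1) / 2) = √X ^ (M + 1) := by
    rw [Real.sqrt_eq_rpow, ← Real.rpow_natCast, ← Real.rpow_mul hX]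
    congr 1; push_cast; ring
  have hbase : D * R * E ≤ √X := by
    apply Real.le_sqrt_of_sq_le
    have hR2 : R ^ 2 = 2 * (M + 1 : ℕ) / a := Real.sq_sqrt (by positivity)
    have h1 : 2 * ((M : ℝ) + 1) ≤ 4 * M * (Real.log M / Real.log 2) := by
      have : 1 ≤ Real.log M / Real.log 2 := (one_le_div hl2).mpr hlog
      nlinarith
    calc (D * R * E) ^ 2 = D ^ 2 * E ^ 2 / a * (2 * ((M : ℝ) + 1)) := by
          rw [mul_pow, mul_pow, hR2]; push_cast; ring
      _ ≤ D ^ 2 * E ^ 2 / a * (4 * M * (Real.log M / Real.log 2)) := by gcongr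
      _ = X := by rw [hX_def]; field_simp
  rw [hrpow]
  calc (D * R) ^ (M + 1) * Real.exp (a / 2) * S
      = (D * R) ^ (M + 1) * (Real.exp (a / 2) * S) := by ring
    _ ≤ (D * R) ^ (M + 1) * E ^ (M + 1) := by
        gcongr
        exact (le_max_right _ _).trans (le_self_pow₀ hE1 (by omega))
    _ = (D * R * E) ^ (M + 1) := by rw [← mul_pow]
    _ ≤ _ := by gcongr
end

section
/- For every positive integer d and every σ > 0 there exists a constant C > 0 (depending only on d and σ) such that for every integer M ≥ 2: ∑_{l=1}^{∞} l^{M+d} e^{−2π² l²/(dσ²)} ≤ (C · M · log M)^{(M+1)/2}. -/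
open Real

/-!
Put `a = 2π²/(dσ²)` and `n = M + d`. One half of the Gaussian absorbs the power and the other half
gives a convergent geometric series: for `l ≥ 1`,
`l ^ n * exp (-a l²) ≤ (l ^ n * exp (-a l² / 2)) * exp (-a l / 2)`, and the square of the first
factor is `(l²) ^ n * exp (-a l²) ≤ n! / a ^ n ≤ (n / a) ^ n`. Hence the sum is at most
`S * √((n / a) ^ n)` with `S = ∑ exp (-a l / 2)`. Since `n ≤ (d + 1) M` and `M ≤ 2 ^ M`, the excess
`M ^ (d - 1)` over `M ^ (M + 1)` is at most exponential in `M` and is absorbed by the constant `C`;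
the factor `log M ≥ log 2` only helps.
-/

/-- Termwise bound: half of the Gaussian absorbs the power, the rest decays exponentially. -/
lemma pow_mul_gaussian_le (a : ℝ) (ha : 0 < a) (n : ℕ) (x : ℝ) (hx : 1 ≤ x) :
    x ^ n * exp (-(a * x ^ 2)) ≤ √((n / a) ^ n) * exp (-(a / 2 * x)) := by
  have hsq : (x ^ n * exp (-(a / 2 * x ^ 2))) ^ 2 ≤ (n / a) ^ n := by
    have h1 := Real.pow_div_factorial_le_exp (a * x ^ 2) (by positivity) n
    have hfac : (n.factorial : ℝ) ≤ (n : ℝ) ^ n := by exact_mod_cast Nat.factorial_le_pow n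
    rw [div_le_iff₀ (by positivity)] at h1
    have h2 : (a * x ^ 2) ^ n ≤ exp (a * x ^ 2) * (n : ℝ) ^ n :=
      h1.trans (by gcongr)
    have h3 : (x ^ n * exp (-(a / 2 * x ^ 2))) ^ 2 = (x ^ 2) ^ n * exp (-(a * x ^ 2)) := by
      rw [mul_pow, ← Real.exp_nat_mul, ← pow_mul, ← pow_mul, mul_comm n 2]
      congr 2
      push_cast
      ring
    rw [h3, div_pow, le_div_iff₀ (by positivity), Real.exp_neg]
    calc (x ^ 2) ^ n * (exp (a * x ^ 2))⁻¹ * a ^ n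
        = (a * x ^ 2) ^ n * (exp (a * x ^ 2))⁻¹ := by rw [mul_pow]; ring
      _ ≤ exp (a * x ^ 2) * (n : ℝ) ^ n * (exp (a * x ^ 2))⁻¹ := by gcongr
      _ = (n : ℝ) ^ n := by field_simp
  calc x ^ n * exp (-(a * x ^ 2))
      = (x ^ n * exp (-(a / 2 * x ^ 2))) * exp (-(a / 2 * x ^ 2)) := by
        rw [mul_assoc, ← Real.exp_add]; congr 2; ring
    _ ≤ √((n / a) ^ n) * exp (-(a / 2 * x)) := by
        gcongr
        · exact Real.le_sqrt_of_sq_le hsq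
        · nlinarith

lemma summable_exp_neg_pnat (b : ℝ) (hb : 0 < b) :
    Summable (fun l : ℕ+ => exp (-(b * ((l : ℕ) : ℝ)))) := by
  have h : Summable (fun l : ℕ => exp (-(b * (l : ℝ)))) := by
    have := Real.summable_exp_nat_mul_iff.mpr (neg_lt_zero.mpr hb)
    refine this.congr fun l => ?_
    congr 1
    ring
  exact h.comp_injective PNat.coe_injective

/-- The powers of `M` beyond `M ^ (M + 1)` and all constants are absorbed by the base. -/
lemma absorb_constants (a : ℝ) (ha : 0 < a) (d : ℕ) (hd : 0 < d) (S : ℝ) :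
    ∃ C : ℝ, 0 < C ∧ ∀ M : ℕ, 2 ≤ M →
      S ^ 2 * (((M + d : ℕ) : ℝ) / a) ^ (M + d) ≤ (C * (M : ℝ) * Real.log M) ^ (M + 1) := by
  set K : ℝ := max 1 ((d + 1) / a) with hK
  have hK1 : 1 ≤ K := le_max_left _ _
  have hlog2 : 0 < Real.log 2 := Real.log_pos (by norm_num)
  refine ⟨(1 + S ^ 2) * K ^ d * 2 ^ d / Real.log 2, by positivity, fun M hM => ?_⟩
  have hMR : (2 : ℝ) ≤ M := by exact_mod_cast hM
  have hdR : (1 : ℝ) ≤ d := by exact_mod_cast hd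
  have hbase : ((M + d : ℕ) : ℝ) / a ≤ K * M := by
    calc ((M + d : ℕ) : ℝ) / a ≤ ((d + 1) * M) / a := by
          gcongr
          push_cast
          nlinarith
      _ = (d + 1) / a * M := by ring
      _ ≤ K * M := by gcongr; exact le_max_right _ _
  have hM2 : (M : ℝ) ≤ 2 ^ (M + 1) := by
    exact_mod_cast (Nat.lt_two_pow_self (n := M)).le.trans
      (Nat.pow_le_pow_right (by norm_num) (Nat.le_succ M))
  have hS : S ^ 2 ≤ (1 + S ^ 2) ^ (M + 1) :=
    (by linarith : S ^ 2 ≤ 1 + S ^ 2).trans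
      (le_self_pow₀ (by nlinarith [sq_nonneg S]) (by omega))
  have hKp : K ^ (M + d) ≤ (K ^ d) ^ (M + 1) := by
    rw [← pow_mul]
    exact pow_le_pow_right₀ hK1 (by nlinarith)
  have hMp : (M : ℝ) ^ (M + d) ≤ (2 ^ d) ^ (M + 1) * (M : ℝ) ^ (M + 1) := by
    calc (M : ℝ) ^ (M + d) = (M : ℝ) ^ d * (M : ℝ) ^ M := by rw [pow_add, mul_comm]
      _ ≤ (2 ^ (M + 1)) ^ d * (M : ℝ) ^ (M + 1) := by
          gcongr
          · linarith
          · omega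
      _ = (2 ^ d) ^ (M + 1) * (M : ℝ) ^ (M + 1) := by rw [← pow_mul, ← pow_mul, mul_comm d]
  calc S ^ 2 * (((M + d : ℕ) : ℝ) / a) ^ (M + d)
      ≤ S ^ 2 * (K * M) ^ (M + d) := by gcongr
    _ = S ^ 2 * (K ^ (M + d) * (M : ℝ) ^ (M + d)) := by rw [mul_pow]
    _ ≤ (1 + S ^ 2) ^ (M + 1) * ((K ^ d) ^ (M + 1) * ((2 ^ d) ^ (M + 1) * (M : ℝ) ^ (M + 1))) := by
        gcongr
    _ = ((1 + S ^ 2) * K ^ d * 2 ^ d * M) ^ (M + 1) := by simp only [mul_pow]; ring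
    _ = ((1 + S ^ 2) * K ^ d * 2 ^ d / Real.log 2 * M * Real.log 2) ^ (M + 1) := by
        congr 1
        field_simp
    _ ≤ _ := by gcongr

/-- For every `d ≥ 1` and `σ > 0` there is `C > 0` such that for all integers `M ≥ 2`,
`∑_{l=1}^∞ l^{M+d} e^{−2π²l²/(dσ²)} ≤ (C M log M)^{(M+1)/2}`. -/
theorem series_power_gaussian_bound (d : ℕ) (hd : 0 < d) (σ : ℝ) (hσ : 0 < σ) :
    ∃ C : ℝ, 0 < C ∧ ∀ M : ℕ, 2 ≤ M →
      Summable (fun l : ℕ+ =>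
        ((l : ℕ) : ℝ) ^ (M + d) *
          Real.exp (-(2 * π ^ 2 * ((l : ℕ) : ℝ) ^ 2) / ((d : ℝ) * σ ^ 2))) ∧
      (∑' l : ℕ+,
          ((l : ℕ) : ℝ) ^ (M + d) *
            Real.exp (-(2 * π ^ 2 * ((l : ℕ) : ℝ) ^ 2) / ((d : ℝ) * σ ^ 2))) ≤
        (C * (M : ℝ) * Real.log M) ^ (((M : ℝ) + 1) / 2) := by
  have hdR : (0 : ℝ) < d := by exact_mod_cast hd
  set a : ℝ := 2 * π ^ 2 / (d * σ ^ 2) with ha_def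
  have ha : 0 < a := by positivity
  have hexp : ∀ x : ℝ, -(2 * π ^ 2 * x ^ 2) / ((d : ℝ) * σ ^ 2) = -(a * x ^ 2) := fun x => by
    rw [ha_def]; ring
  simp only [hexp]
  have hsum := summable_exp_neg_pnat (a / 2) (by positivity)
  set S : ℝ := ∑' l : ℕ+, exp (-(a / 2 * ((l : ℕ) : ℝ))) with hS
  obtain ⟨C, hC, hCM⟩ := absorb_constants a ha d hd S
  refine ⟨C, hC, fun M hM => ?_⟩
  have hterm : ∀ l : ℕ+, ((l : ℕ) : ℝ) ^ (M + d) * exp (-(a * ((l : ℕ) : ℝ) ^ 2)) ≤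
      √((((M + d : ℕ) : ℝ) / a) ^ (M + d)) * exp (-(a / 2 * ((l : ℕ) : ℝ))) := fun l =>
    pow_mul_gaussian_le a ha (M + d) _ (by exact_mod_cast l.one_le)
  have hmaj := hsum.mul_left (√((((M + d : ℕ) : ℝ) / a) ^ (M + d)))
  have hsummable := Summable.of_nonneg_of_le (fun l : ℕ+ => by positivity) hterm hmaj
  refine ⟨hsummable, (hsummable.tsum_le_tsum hterm hmaj).trans ?_⟩
  rw [tsum_mul_left, ← hS]
  have hlog : 0 ≤ Real.log M := Real.log_natCast_nonneg M
  have hX : 0 ≤ C * (M : ℝ) * Real.log M := by positivity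
  have hrpow : (C * (M : ℝ) * Real.log M) ^ (((M : ℝ) + 1) / 2) =
      √((C * (M : ℝ) * Real.log M) ^ (M + 1)) := by
    rw [Real.sqrt_eq_rpow, ← Real.rpow_natCast, ← Real.rpow_mul hX]
    congr 1
    push_cast
    ring
  rw [hrpow]
  apply Real.le_sqrt_of_sq_le
  rw [mul_pow, Real.sq_sqrt (by positivity), mul_comm]
  exact hCM M hM
end

section
/- Let X be a compact topological space with a finite Borel measure μ, and let p, q be continuous, strictly positive probability densities on X with Hellinger affinity A = ∫_X √(p q) dμ < 1. Set t* = arccos(A) ∈ (0, π/2], f = (√q − √p cos t*)/ sin t*, and for t ∈ [0, t*] let ρ_t = (√p cos t + f sin t)², which is a strictly positive probability density on X with ρ_0 = p and ρ_{t*} = q. Then there exists a constant C > 0 (depending on p, q, and μ) such that for all 0 ≤ s_1 ≤ s_2 ≤ t*: KL(ρ_{s_2} ‖ ρ_{s_1}) ≤ 2 (s_2 − s_1)² + C · μ(X) · (s_2 − s_1)³. -/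
/-!
Write `ρ_t = g_t²` with `g_t = √p cos t + f sin t`, where `√p` and `f` are orthonormal in `L²(μ)`.
For `u, v > 0`, Taylor expansion of `r² log r` at `1` to third order, whose fourth derivative
`-2/r²` is negative, gives
`u² log (u²/v²) ≤ 3u² - 4uv + v² + (2/3) (u - v)³ / v` (`sq_mul_log_le`).
With `u = g_{s₂}` and `v = g_{s₁}`, orthonormality makes the quadratic part integrate to
`4 - 4 cos (s₂ - s₁) ≤ 2 (s₂ - s₁)²`. The cubic part is at most `(2/3) M³/m (s₂ - s₁)³` pointwise,
where `|g_{s₂} - g_{s₁}| ≤ M (s₂ - s₁)` because `√p + |f|` is bounded, and `g_t ≥ m > 0` because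
`g_t sin t* = √p sin (t* - t) + √q sin t` (`geodesic_ge`).
-/

open MeasureTheory Real

/-- The inequality `r² log r ≤ (r - 1) + (3/2) (r - 1)² + (1/3) (r - 1)³`, divided by `r²`. The
difference of the two sides has derivative `(r - 1)³ / (3 r³)`, so it is minimal at `r = 1`. -/
lemma log_le_cubic {r : ℝ} (hr : 0 < r) :
    Real.log r ≤ r / 3 + 1 / 2 - r⁻¹ + (r ^ 2)⁻¹ / 6 := by
  set F : ℝ → ℝ := fun r => r / 3 + 1 / 2 - r⁻¹ + (r ^ 2)⁻¹ / 6 - Real.log r with hF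
  have hd : ∀ x : ℝ, 0 < x → HasDerivAt F ((x - 1) ^ 3 / (3 * x ^ 3)) x := by
    intro x hx
    have h1 := (((((hasDerivAt_id x).div_const 3).add_const (1 / 2)).sub
      (hasDerivAt_inv hx.ne')).add
      (((hasDerivAt_pow 2 x).inv (by positivity)).div_const 6)).sub
      (Real.hasDerivAt_log hx.ne')
    refine h1.congr_deriv ?_
    simp only [Nat.cast_ofNat]
    field_simp
    ring
  have hF1 : F 1 = 0 := by simp [hF]; norm_num
  have key : F 1 ≤ F r := by
    rcases le_total r 1 with h | h
    · have hanti : AntitoneOn F (Set.Ioc 0 1) := by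
        apply antitoneOn_of_deriv_nonpos (convex_Ioc 0 1)
        · exact fun x hx => (hd x hx.1).continuousAt.continuousWithinAt
        · intro x hx
          rw [interior_Ioc] at hx
          exact (hd x hx.1).differentiableAt.differentiableWithinAt
        · intro x hx
          rw [interior_Ioc] at hx
          rw [(hd x hx.1).deriv]
          have := hx.1
          apply div_nonpos_of_nonpos_of_nonneg _ (by positivity)
          exact (Odd.pow_nonpos (by decide) (by linarith [hx.2]))
      exact hanti ⟨hr, h⟩ ⟨one_pos, le_rfl⟩ h
    · have hmono : MonotoneOn F (Set.Ici 1) := by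
        apply monotoneOn_of_deriv_nonneg (convex_Ici 1)
        · exact fun x hx => (hd x (one_pos.trans_le hx)).continuousAt.continuousWithinAt
        · intro x hx
          rw [interior_Ici] at hx
          exact (hd x (one_pos.trans hx)).differentiableAt.differentiableWithinAt
        · intro x hx
          rw [interior_Ici] at hx
          have hx1 : (1 : ℝ) < x := hx
          rw [(hd x (one_pos.trans hx)).deriv]
          have : 0 < x - 1 := by linarith
          positivity
      exact hmono (Set.mem_Ici.2 le_rfl) h h
  rw [hF1] at key
  simp only [hF] at key
  linarith

lemma sq_mul_log_le {u v : ℝ} (hu : 0 < u) (hv : 0 < v) :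
    u ^ 2 * Real.log (u ^ 2 / v ^ 2) ≤
      3 * u ^ 2 - 4 * (u * v) + v ^ 2 + 2 / 3 * (u - v) ^ 3 / v := by
  have h := mul_le_mul_of_nonneg_left (log_le_cubic (div_pos hu hv))
    (by positivity : 0 ≤ 2 * u ^ 2)
  rw [← div_pow, Real.log_pow]
  calc _ = 2 * u ^ 2 * Real.log (u / v) := by push_cast; ring
    _ ≤ _ := h
    _ = _ := by field_simp; ring

/-- Since `a cos t + ((b - a cos T) / sin T) sin t = (a sin (T - t) + b sin t) / sin T` and
`sin (T - t) + sin t ≥ sin T`, the geodesic from `a` to `b` stays above any common lower bound. -/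
lemma geodesic_ge {a b m t T : ℝ} (hm : 0 < m) (ha : m ≤ a) (hb : m ≤ b) (ht : 0 ≤ t) (htT : t ≤ T)
    (hT : T ≤ Real.pi) (hs : 0 < Real.sin T) :
    m ≤ a * Real.cos t + (b - a * Real.cos T) / Real.sin T * Real.sin t := by
  have e : a * Real.cos t + (b - a * Real.cos T) / Real.sin T * Real.sin t =
      (a * Real.sin (T - t) + b * Real.sin t) / Real.sin T := by
    rw [Real.sin_sub]; field_simp; ring
  rw [e, le_div_iff₀ hs]
  have h1 : 0 ≤ Real.sin (T - t) :=
    Real.sin_nonneg_of_nonneg_of_le_pi (by linarith) (by linarith)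
  have h2 : 0 ≤ Real.sin t := Real.sin_nonneg_of_nonneg_of_le_pi ht (by linarith)
  have h3 : Real.sin T = Real.sin (T - t) * Real.cos t + Real.cos (T - t) * Real.sin t := by
    rw [← Real.sin_add]; congr 1; ring
  have h4 : Real.sin T ≤ Real.sin (T - t) + Real.sin t := by
    rw [h3]
    nlinarith [Real.cos_le_one t, Real.cos_le_one (T - t)]
  nlinarith [mul_le_mul_of_nonneg_right ha h1, mul_le_mul_of_nonneg_right hb h2]

lemma abs_combination_sub_le (a b s t : ℝ) :
    |(a * Real.cos t + b * Real.sin t) - (a * Real.cos s + b * Real.sin s)| ≤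
      (|a| + |b|) * |t - s| := by
  have hc := Real.abs_cos_sub_cos_le t s
  have hs := Real.abs_sin_sub_sin_le t s
  calc _ = |a * (Real.cos t - Real.cos s) + b * (Real.sin t - Real.sin s)| := by congr 1; ring
    _ ≤ |a * (Real.cos t - Real.cos s)| + |b * (Real.sin t - Real.sin s)| := abs_add_le _ _
    _ ≤ |a| * |t - s| + |b| * |t - s| := by rw [abs_mul, abs_mul]; gcongr
    _ = _ := by ring

/-- Along a great circle through `L²`-orthonormal functions `a, b`, the quadratic part of the
bound in `sq_mul_log_le` has integral `4 - 4 cos (t - s)`. -/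
lemma integral_quadratic {X : Type*} [MeasurableSpace X] (μ : Measure X) (a b : X → ℝ) (s t : ℝ)
    (ia : Integrable (fun x => a x ^ 2) μ) (iab : Integrable (fun x => a x * b x) μ)
    (ib : Integrable (fun x => b x ^ 2) μ)
    (ha : ∫ x, a x ^ 2 ∂μ = 1) (hab : ∫ x, a x * b x ∂μ = 0) (hb : ∫ x, b x ^ 2 ∂μ = 1) :
    ∫ x, (3 * (a x * Real.cos t + b x * Real.sin t) ^ 2
      - 4 * ((a x * Real.cos t + b x * Real.sin t) * (a x * Real.cos s + b x * Real.sin s))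
      + (a x * Real.cos s + b x * Real.sin s) ^ 2) ∂μ = 4 - 4 * Real.cos (t - s) := by
  have e : ∀ x, (3 * (a x * Real.cos t + b x * Real.sin t) ^ 2
      - 4 * ((a x * Real.cos t + b x * Real.sin t) * (a x * Real.cos s + b x * Real.sin s))
      + (a x * Real.cos s + b x * Real.sin s) ^ 2) =
      (3 * Real.cos t ^ 2 - 4 * (Real.cos t * Real.cos s) + Real.cos s ^ 2) * a x ^ 2
      + (6 * Real.cos t * Real.sin t - 4 * (Real.cos t * Real.sin s + Real.sin t * Real.cos s)
        + 2 * Real.cos s * Real.sin s) * (a x * b x)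
      + (3 * Real.sin t ^ 2 - 4 * (Real.sin t * Real.sin s) + Real.sin s ^ 2) * b x ^ 2 := by
    intro x; ring
  simp_rw [e]
  rw [integral_add ((ia.const_mul _).fun_add (iab.const_mul _)) (ib.const_mul _),
    integral_add (ia.const_mul _) (iab.const_mul _), integral_const_mul, integral_const_mul,
    integral_const_mul, ha, hab, hb, Real.cos_sub]
  linear_combination 3 * Real.sin_sq_add_cos_sq t + Real.sin_sq_add_cos_sq s

/-- Local quadratic bound for the KL divergence along the Fisher–Rao geodesic: with
`t* = arccos(∫ √(p q) dμ)`, `f = (√q − √p cos t*)/sin t*` and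
`ρ_t = (√p cos t + f sin t)²`, there is a constant `C > 0` such that for all
`0 ≤ s₁ ≤ s₂ ≤ t*`, `KL(ρ_{s₂} ‖ ρ_{s₁}) ≤ 2 (s₂ − s₁)² + C μ(X) (s₂ − s₁)³`. -/
theorem kl_along_geodesic_quadratic_bound {X : Type*} [TopologicalSpace X] [CompactSpace X]
    [MeasurableSpace X] [BorelSpace X] (μ : Measure X) [IsFiniteMeasure μ]
    (p q : X → ℝ) (hp : IsProbDensity μ p) (hq : IsProbDensity μ q)
    (hpc : Continuous p) (hqc : Continuous q)
    (hppos : ∀ x, 0 < p x) (hqpos : ∀ x, 0 < q x)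
    (hA : ∫ x, Real.sqrt (p x * q x) ∂μ < 1) :
    let tstar := Real.arccos (∫ x, Real.sqrt (p x * q x) ∂μ)
    let f : X → ℝ := fun x =>
      (Real.sqrt (q x) - Real.sqrt (p x) * Real.cos tstar) / Real.sin tstar
    let ρ : ℝ → X → ℝ := fun t x =>
      (Real.sqrt (p x) * Real.cos t + f x * Real.sin t) ^ 2
    ∃ C : ℝ, 0 < C ∧ ∀ s₁ s₂ : ℝ, 0 ≤ s₁ → s₁ ≤ s₂ → s₂ ≤ tstar →
      ∫ x, ρ s₂ x * Real.log (ρ s₂ x / ρ s₁ x) ∂μ ≤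
        2 * (s₂ - s₁) ^ 2 + C * (μ Set.univ).toReal * (s₂ - s₁) ^ 3 := by
  intro T f ρ
  have hcont_int : ∀ g : X → ℝ, Continuous g → Integrable g μ := fun g hg =>
    hg.integrable_of_hasCompactSupport (HasCompactSupport.of_compactSpace g)
  set A := ∫ x, Real.sqrt (p x * q x) ∂μ with hAdef
  have hA0 : 0 ≤ A := integral_nonneg fun x => Real.sqrt_nonneg _
  have hcos : Real.cos T = A := Real.cos_arccos (by linarith) hA.le
  have hTpos : 0 < T := Real.arccos_pos.2 hA
  have hTle : T ≤ Real.pi := Real.arccos_le_pi _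
  have hsin : 0 < Real.sin T := by
    refine Real.sin_pos_of_pos_of_lt_pi hTpos ?_
    have : T ≤ Real.pi / 2 := Real.arccos_le_pi_div_two.2 hA0
    linarith [Real.pi_pos]
  have hne : Nonempty X := by
    by_contra h
    rw [not_nonempty_iff] at h
    have := hp.2.2
    simp [Measure.eq_zero_of_isEmpty μ] at this
  set a : X → ℝ := fun x => Real.sqrt (p x) with ha
  set b : X → ℝ := fun x => Real.sqrt (q x) with hb
  have hac : Continuous a := hpc.sqrt
  have hbc : Continuous b := hqc.sqrt
  have hfc : Continuous f := (hbc.sub (hac.mul_const _)).div_const _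
  have hasq : ∀ x, a x ^ 2 = p x := fun x => Real.sq_sqrt (hppos x).le
  have hbsq : ∀ x, b x ^ 2 = q x := fun x => Real.sq_sqrt (hqpos x).le
  have hab : ∀ x, a x * b x = Real.sqrt (p x * q x) := fun x =>
    (Real.sqrt_mul (hppos x).le _).symm
  have Ia : ∫ x, a x ^ 2 ∂μ = 1 := by simp_rw [hasq]; exact hp.2.2
  have Ib : ∫ x, b x ^ 2 ∂μ = 1 := by simp_rw [hbsq]; exact hq.2.2
  have Iab : ∫ x, a x * b x ∂μ = A := by simp_rw [hab]; rfl
  have ia : Integrable (fun x => a x ^ 2) μ := hcont_int _ (hac.pow 2)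
  have ib : Integrable (fun x => b x ^ 2) μ := hcont_int _ (hbc.pow 2)
  have iab : Integrable (fun x => a x * b x) μ := hcont_int _ (hac.mul hbc)
  have hss : Real.sin T ^ 2 = 1 - A ^ 2 := by rw [Real.sin_sq, hcos]
  have Iaf : ∫ x, a x * f x ∂μ = 0 := by
    have e : ∀ x, a x * f x = (Real.sin T)⁻¹ * (a x * b x - A * a x ^ 2) := by
      intro x
      simp only [show f x = (b x - a x * A) / Real.sin T by rw [← hcos]]
      field_simp
    simp_rw [e]
    rw [integral_const_mul, integral_sub iab (ia.const_mul _), integral_const_mul, Iab, Ia]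
    ring
  have Iff : ∫ x, f x ^ 2 ∂μ = 1 := by
    have e : ∀ x, f x ^ 2 =
        (Real.sin T ^ 2)⁻¹ * (b x ^ 2 - 2 * A * (a x * b x) + A ^ 2 * a x ^ 2) := by
      intro x
      simp only [show f x = (b x - a x * A) / Real.sin T by rw [← hcos]]
      field_simp
      ring
    simp_rw [e]
    rw [integral_const_mul, integral_add (f := fun x => b x ^ 2 - 2 * A * (a x * b x))
      (ib.sub (iab.const_mul _)) (ia.const_mul _),
      integral_sub ib (iab.const_mul _), integral_const_mul, integral_const_mul, Iab, Ia, Ib]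
    have : Real.sin T ^ 2 ≠ 0 := by positivity
    rw [inv_mul_eq_one₀ this, hss]
    ring
  obtain ⟨x₀, -, hx₀⟩ := isCompact_univ.exists_isMinOn Set.univ_nonempty
    (hac.min hbc).continuousOn
  obtain ⟨x₁, -, hx₁⟩ := isCompact_univ.exists_isMaxOn Set.univ_nonempty
    (hac.abs.add hfc.abs).continuousOn
  set m := min (a x₀) (b x₀)
  have hm : 0 < m := lt_min (Real.sqrt_pos.2 (hppos _)) (Real.sqrt_pos.2 (hqpos _))
  have hma : ∀ x, m ≤ a x := fun x => (hx₀ (Set.mem_univ x)).trans (min_le_left _ _)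
  have hmb : ∀ x, m ≤ b x := fun x => (hx₀ (Set.mem_univ x)).trans (min_le_right _ _)
  set M := |a x₁| + |f x₁|
  have hM : ∀ x, |a x| + |f x| ≤ M := fun x => hx₁ (Set.mem_univ x)
  have hMpos : 0 < M :=
    add_pos_of_pos_of_nonneg (abs_pos.2 (hm.trans_le (hma x₁)).ne') (abs_nonneg _)
  refine ⟨2 / 3 * M ^ 3 / m, by positivity, ?_⟩
  intro s₁ s₂ h0 h12 h2
  set u : X → ℝ := fun x => a x * Real.cos s₂ + f x * Real.sin s₂ with hu
  set v : X → ℝ := fun x => a x * Real.cos s₁ + f x * Real.sin s₁ with hv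
  have hmu : ∀ x, m ≤ u x := fun x =>
    geodesic_ge hm (hma x) (hmb x) (h0.trans h12) h2 hTle hsin
  have hmv : ∀ x, m ≤ v x := fun x =>
    geodesic_ge hm (hma x) (hmb x) h0 (h12.trans h2) hTle hsin
  have hupos : ∀ x, 0 < u x := fun x => hm.trans_le (hmu x)
  have hvpos : ∀ x, 0 < v x := fun x => hm.trans_le (hmv x)
  have huc : Continuous u := (hac.mul_const _).add (hfc.mul_const _)
  have hvc : Continuous v := (hac.mul_const _).add (hfc.mul_const _)
  have hcube : ∀ x, 2 / 3 * (u x - v x) ^ 3 / v x ≤ 2 / 3 * M ^ 3 / m * (s₂ - s₁) ^ 3 := by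
    intro x
    have h1 : |u x - v x| ≤ M * (s₂ - s₁) := by
      refine (abs_combination_sub_le (a x) (f x) s₁ s₂).trans ?_
      rw [abs_of_nonneg (sub_nonneg.2 h12)]
      exact mul_le_mul_of_nonneg_right (hM x) (sub_nonneg.2 h12)
    have h3 : (u x - v x) ^ 3 ≤ (M * (s₂ - s₁)) ^ 3 :=
      calc (u x - v x) ^ 3 ≤ |(u x - v x) ^ 3| := le_abs_self _
        _ = |u x - v x| ^ 3 := abs_pow _ _
        _ ≤ _ := pow_le_pow_left₀ (abs_nonneg _) h1 3
    have h4 : 0 ≤ M * (s₂ - s₁) := mul_nonneg hMpos.le (sub_nonneg.2 h12)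
    calc 2 / 3 * (u x - v x) ^ 3 / v x ≤ 2 / 3 * (M * (s₂ - s₁)) ^ 3 / v x := by
          have := hvpos x
          gcongr
      _ ≤ 2 / 3 * (M * (s₂ - s₁)) ^ 3 / m :=
          div_le_div_of_nonneg_left (by positivity) hm (hmv x)
      _ = _ := by ring
  have hLc : Continuous fun x => u x ^ 2 * Real.log (u x ^ 2 / v x ^ 2) := by
    refine (huc.pow 2).mul (Continuous.log ((huc.pow 2).div (hvc.pow 2) fun x => ?_) fun x => ?_)
    · exact (pow_pos (hvpos x) 2).ne'
    · exact (div_pos (pow_pos (hupos x) 2) (pow_pos (hvpos x) 2)).ne'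
  have iQ : Integrable (fun x => 3 * u x ^ 2 - 4 * (u x * v x) + v x ^ 2) μ :=
    hcont_int _ (by fun_prop)
  calc ∫ x, u x ^ 2 * Real.log (u x ^ 2 / v x ^ 2) ∂μ
      ≤ ∫ x, ((3 * u x ^ 2 - 4 * (u x * v x) + v x ^ 2)
          + 2 / 3 * M ^ 3 / m * (s₂ - s₁) ^ 3) ∂μ := by
        refine integral_mono (hcont_int _ hLc) (iQ.add (integrable_const _)) fun x => ?_
        exact (sq_mul_log_le (hupos x) (hvpos x)).trans (by gcongr; exact hcube x)
    _ = (4 - 4 * Real.cos (s₂ - s₁))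
          + (μ Set.univ).toReal * (2 / 3 * M ^ 3 / m * (s₂ - s₁) ^ 3) := by
        rw [integral_add iQ (integrable_const _), integral_const, smul_eq_mul, measureReal_def]
        congr 1
        exact integral_quadratic μ a f s₁ s₂ ia (hcont_int _ (hac.mul hfc)) (hcont_int _ (hfc.pow 2))
          Ia Iaf Iff
    _ ≤ _ := by
        have := Real.one_sub_sq_div_two_le_cos (x := s₂ - s₁)
        linarith
end
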